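/- arXiv:2602.12001 — 3 statements merged into one kernel-verified Lean document; each statement's English description precedes it below -/
import Mathlib

section
/- Let n ≥ 2 and α > 0. There exists a nonlinearity f ∈ C¹(ℝ) and a one-dimensional stable solution u of the mean curvature equation div(∇u/√(1+|∇u|²)) = −f(u) in B₁ ⊂ ℝⁿ (i.e., u depends only on the variable x₁) such that ∇u does not belong to the Morrey space M^{n+α}(B₁). -/
open MeasureTheory Metric Real Filter Asymptotics Bornology
open scoped RealInnerProductSpace Topology

noncomputable section

/-- Euclidean space `ℝⁿ`. -/
abbrev Euc (n : ℕ) := EuclideanSpace ℝ (Fin n)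

/-- `φ` is an admissible test function on `Ω`: smooth with compact support contained in `Ω`
(i.e. `φ ∈ C_c^∞(Ω)`). -/
def IsTestFun {n : ℕ} (Ω : Set (Euc n)) (φ : Euc n → ℝ) : Prop :=
  ContDiff ℝ (⊤ : ℕ∞) φ ∧ HasCompactSupport φ ∧ tsupport φ ⊆ Ω

/-- `u` is a weak solution of the mean curvature equation
`div(∇u/√(1+|∇u|²)) = -f(u)` in `Ω`:  `u ∈ W^{1,1}_loc(Ω)`, `f(u) ∈ L¹_loc(Ω)` and
`∫_Ω ∇u·∇φ/√(1+|∇u|²) = ∫_Ω f(u) φ` for every `φ ∈ C_c^∞(Ω)`. -/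
def IsWeakSolution {n : ℕ} (Ω : Set (Euc n)) (f : ℝ → ℝ) (u : Euc n → ℝ) : Prop :=
  LocallyIntegrableOn u Ω ∧
  LocallyIntegrableOn (fun x => ‖gradient u x‖) Ω ∧
  LocallyIntegrableOn (fun x => f (u x)) Ω ∧
  ∀ φ : Euc n → ℝ, IsTestFun Ω φ →
    ∫ x in Ω, ⟪gradient u x, gradient φ x⟫ / Real.sqrt (1 + ‖gradient u x‖ ^ 2)
      = ∫ x in Ω, f (u x) * φ x

/-- `u` is a stable solution of `div(∇u/√(1+|∇u|²)) = -f(u)` in `Ω`: it is a weak solution,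
`f'(u) ∈ L¹_loc(Ω)` and the second variation of the energy at `u` is nonnegative:
`∫_Ω f'(u) ξ² ≤ ∫_Ω (|∇ξ|²/√(1+|∇u|²) - (∇u·∇ξ)²/(1+|∇u|²)^{3/2})` for all `ξ ∈ C_c^∞(Ω)`. -/
def IsStableSolution {n : ℕ} (Ω : Set (Euc n)) (f : ℝ → ℝ) (u : Euc n → ℝ) : Prop :=
  IsWeakSolution Ω f u ∧
  LocallyIntegrableOn (fun x => deriv f (u x)) Ω ∧
  ∀ ξ : Euc n → ℝ, IsTestFun Ω ξ →
    ∫ x in Ω, deriv f (u x) * ξ x ^ 2 ≤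
      ∫ x in Ω, (‖gradient ξ x‖ ^ 2 / Real.sqrt (1 + ‖gradient u x‖ ^ 2)
        - ⟪gradient u x, gradient ξ x⟫ ^ 2 / (1 + ‖gradient u x‖ ^ 2) ^ ((3:ℝ)/2))

/-- A vector field `g` belongs to the Morrey space `M^p(Ω)`: there is `K > 0` with
`∫_{B_ρ(x₀) ∩ Ω} |g| ≤ K ρ^{n(1-1/p)}` for all `x₀ ∈ Ω` and `0 < ρ ≤ diam Ω`. -/
def MemMorrey {n : ℕ} (Ω : Set (Euc n)) (p : ℝ) (g : Euc n → Euc n) : Prop :=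
  ∃ K > (0:ℝ), ∀ x₀ ∈ Ω, ∀ ρ : ℝ, 0 < ρ → ρ ≤ Metric.diam Ω →
    ∫ x in Metric.ball x₀ ρ ∩ Ω, ‖g x‖ ≤ K * ρ ^ ((n : ℝ) * (1 - 1 / p))

/-! ## One-dimensional ingredients -/

/-- First derivative of the power function with exponent 2k+5. -/
def vp (k : ℕ) (s : ℝ) : ℝ := (2 * k + 5) * s ^ (2 * k + 4)

/-- Second derivative of the power function with exponent 2k+5. -/
def vpp (k : ℕ) (s : ℝ) : ℝ := (2 * k + 5) * (2 * k + 4) * s ^ (2 * k + 3)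

/-- Squared second derivative over the first derivative. -/
def vq (k : ℕ) (s : ℝ) : ℝ := (2 * k + 5) * (2 * k + 4) ^ 2 * s ^ (2 * k + 2)

/-- The area factor of the inverse graph. -/
def vW (k : ℕ) (s : ℝ) : ℝ := Real.sqrt (1 + vp k s ^ 2)

/-- The nonlinearity. -/
def nl (k : ℕ) (s : ℝ) : ℝ := vpp k s / vW k s ^ 3

lemma vp_nonneg (k : ℕ) (s : ℝ) : 0 ≤ vp k s := by
  unfold vp
  have : Even (2 * k + 4) := ⟨k + 2, by ring⟩
  have := this.pow_nonneg s
  positivity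

lemma vp_pos (k : ℕ) {s : ℝ} (hs : s ≠ 0) : 0 < vp k s := by
  unfold vp
  have : Even (2 * k + 4) := ⟨k + 2, by ring⟩
  have := this.pow_pos hs
  positivity

lemma vW_pos (k : ℕ) (s : ℝ) : 0 < vW k s := by
  unfold vW; positivity

lemma vW_sq (k : ℕ) (s : ℝ) : vW k s ^ 2 = 1 + vp k s ^ 2 := by
  unfold vW; rw [Real.sq_sqrt]; positivity

lemma hasDerivAt_v (k : ℕ) (s : ℝ) : HasDerivAt (fun s : ℝ => s ^ (2 * k + 5)) (vp k s) s := by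
  have := hasDerivAt_pow (2 * k + 5) s
  simpa [vp] using this

lemma hasDerivAt_vp (k : ℕ) (s : ℝ) : HasDerivAt (vp k) (vpp k s) s := by
  have := (hasDerivAt_pow (2 * k + 4) s).const_mul (2 * (k : ℝ) + 5)
  refine HasDerivAt.congr_deriv (f := vp k) this ?_
  simp [vpp]; ring

lemma contDiff_vp (k : ℕ) : ContDiff ℝ 1 (vp k) := by unfold vp; fun_prop
lemma contDiff_vpp (k : ℕ) : ContDiff ℝ 1 (vpp k) := by unfold vpp; fun_prop
lemma contDiff_vW (k : ℕ) : ContDiff ℝ 1 (vW k) := by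
  unfold vW
  have := contDiff_vp k
  refine ContDiff.sqrt (by fun_prop) (fun x => by positivity)

lemma contDiff_nl (k : ℕ) : ContDiff ℝ 1 (nl k) := by
  unfold nl
  exact (contDiff_vpp k).div ((contDiff_vW k).pow 3) (fun x => (pow_pos (vW_pos k x) 3).ne')

lemma cont_vp (k : ℕ) : Continuous (vp k) := (contDiff_vp k).continuous
lemma cont_vpp (k : ℕ) : Continuous (vpp k) := (contDiff_vpp k).continuous
lemma cont_vW (k : ℕ) : Continuous (vW k) := (contDiff_vW k).continuous
lemma cont_nl (k : ℕ) : Continuous (nl k) := (contDiff_nl k).continuous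
lemma cont_dnl (k : ℕ) : Continuous (deriv (nl k)) := (contDiff_nl k).continuous_deriv le_rfl
lemma cont_vq (k : ℕ) : Continuous (vq k) := by unfold vq; fun_prop

lemma hasDerivAt_vW (k : ℕ) (s : ℝ) :
    HasDerivAt (vW k) (vp k s * vpp k s / vW k s) s := by
  have h0 : HasDerivAt (fun s => 1 + vp k s ^ 2) (2 * vp k s * vpp k s) s := by
    have := ((hasDerivAt_vp k s).pow 2).const_add 1
    refine HasDerivAt.congr_deriv (f := fun s => 1 + vp k s ^ 2) this ?_
    norm_num
  have h := h0.sqrt (by positivity)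
  refine HasDerivAt.congr_deriv (f := vW k) h ?_
  change 2 * vp k s * vpp k s / (2 * vW k s) = _
  have := (vW_pos k s).ne'
  field_simp

lemma hasDerivAt_Gam (k : ℕ) (s : ℝ) :
    HasDerivAt (fun s => (vW k s)⁻¹) (-(nl k s) * vp k s) s := by
  have h := (hasDerivAt_vW k s).inv (vW_pos k s).ne'
  refine HasDerivAt.congr_deriv (f := fun s => (vW k s)⁻¹) h ?_
  have := (vW_pos k s).ne'
  simp only [nl]
  field_simp

lemma vp_mul_vq (k : ℕ) (s : ℝ) : vp k s * vq k s = vpp k s ^ 2 := by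
  unfold vp vq vpp; ring

lemma hasDerivAt_H (k : ℕ) (s : ℝ) :
    HasDerivAt (fun s => nl k s * vp k s)
      ((deriv (nl k) s + vq k s / vW k s ^ 3) * vp k s) s := by
  have h1 : HasDerivAt (nl k) (deriv (nl k) s) s :=
    ((contDiff_nl k).differentiable one_ne_zero s).hasDerivAt
  refine HasDerivAt.congr_deriv (f := fun s => nl k s * vp k s) (h1.mul (hasDerivAt_vp k s)) ?_
  have := vp_mul_vq k s
  have hW := (vW_pos k s).ne'
  simp only [nl]
  field_simp
  linear_combination -this

lemma key_ineq (k : ℕ) (s ξ D N : ℝ) (hN : D ^ 2 ≤ N) :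
    deriv (nl k) s * ξ ^ 2 ≤
      (N * (vp k s / vW k s) - D ^ 2 * (vp k s / vW k s ^ 3)) +
      ((deriv (nl k) s + vq k s / vW k s ^ 3) * ξ ^ 2 + nl k s * vp k s * (2 * ξ * D)) := by
  have hW := vW_pos k s
  have h1 : D ^ 2 * (vp k s / vW k s) ≤ N * (vp k s / vW k s) :=
    mul_le_mul_of_nonneg_right hN (div_nonneg (vp_nonneg k s) hW.le)
  have h2 : 0 ≤ ((2 * k + 5) * ((2 * k + 4) * s ^ (k + 1) * ξ +
      (2 * k + 5) * s ^ (3 * k + 6) * D) ^ 2) / vW k s ^ 3 := by positivity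
  have h3 : ((2 * k + 5) * ((2 * k + 4) * s ^ (k + 1) * ξ +
      (2 * k + 5) * s ^ (3 * k + 6) * D) ^ 2) / vW k s ^ 3 =
      D ^ 2 * (vp k s / vW k s) - D ^ 2 * (vp k s / vW k s ^ 3) +
      (vq k s / vW k s ^ 3 * ξ ^ 2 + nl k s * vp k s * (2 * ξ * D)) := by
    have h4 : (2 * k + 5) * ((2 * k + 4) * s ^ (k + 1) * ξ +
      (2 * k + 5) * s ^ (3 * k + 6) * D) ^ 2 =
      D ^ 2 * vp k s ^ 3 + vq k s * ξ ^ 2 + vpp k s * vp k s * (2 * ξ * D) := by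
      unfold vp vq vpp; ring
    rw [h4]
    simp only [nl]
    field_simp
    linear_combination - D ^ 2 * vp k s * vW_sq k s
  nlinarith

lemma odd_m (k : ℕ) : Odd (2 * k + 5) := ⟨k + 2, by ring⟩

lemma pow_surj (k : ℕ) : Function.Surjective (fun s : ℝ => s ^ (2 * k + 5)) := by
  have hc : Continuous (fun s : ℝ => s ^ (2 * k + 5)) := by fun_prop
  refine hc.surjective (tendsto_pow_atTop (by omega)) ?_
  have := (tendsto_pow_atTop (α := ℝ) (n := 2 * k + 5) (by omega)).comp tendsto_neg_atBot_atTop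
  refine (tendsto_neg_atTop_atBot.comp this).congr fun x => ?_
  simp [(odd_m k).neg_pow]

/-- The odd root. -/
def rt (k : ℕ) : ℝ → ℝ :=
  (StrictMono.orderIsoOfSurjective _ ((odd_m k).strictMono_pow (R := ℝ)) (pow_surj k)).symm

lemma rt_pow (k : ℕ) (t : ℝ) : (rt k t) ^ (2 * k + 5) = t :=
  StrictMono.orderIsoOfSurjective_self_symm_apply _ ((odd_m k).strictMono_pow (R := ℝ))
    (pow_surj k) t

lemma pow_rt (k : ℕ) (s : ℝ) : rt k (s ^ (2 * k + 5)) = s :=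
  StrictMono.orderIsoOfSurjective_symm_apply_self _ ((odd_m k).strictMono_pow (R := ℝ))
    (pow_surj k) s

lemma cont_rt (k : ℕ) : Continuous (rt k) := OrderIso.continuous _

lemma rt_ne (k : ℕ) {t : ℝ} (ht : t ≠ 0) : rt k t ≠ 0 := by
  intro h
  have := rt_pow k t
  rw [h] at this
  simp at this
  exact ht this.symm

lemma hasDerivAt_rt (k : ℕ) {t : ℝ} (ht : t ≠ 0) : HasDerivAt (rt k) (vp k (rt k t))⁻¹ t :=
  HasDerivAt.of_local_left_inverse (cont_rt k).continuousAt (hasDerivAt_v k _)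
    (vp_pos k (rt_ne k ht)).ne' (Eventually.of_forall (rt_pow k))

lemma hasDerivAt_comp_rt (k : ℕ) {F P : ℝ → ℝ} (hF : ∀ s, HasDerivAt F (P s * vp k s) s)
    (hP : Continuous P) (t : ℝ) : HasDerivAt (fun t => F (rt k t)) (P (rt k t)) t := by
  have hFc : Continuous F := continuous_iff_continuousAt.2 fun s => (hF s).continuousAt
  refine hasDerivAt_of_hasDerivAt_of_ne' (g := fun t => P (rt k t)) (x := 0) ?_
    (hFc.comp (cont_rt k)).continuousAt (hP.comp (cont_rt k)).continuousAt t
  intro y hy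
  have := (hF (rt k y)).comp y (hasDerivAt_rt k hy)
  refine HasDerivAt.congr_deriv (f := fun t => F (rt k t)) this ?_
  have := (vp_pos k (rt_ne k hy)).ne'
  field_simp

/-- The derivative of the odd root. -/
def rd (k : ℕ) (t : ℝ) : ℝ := (vp k (rt k t))⁻¹

lemma rd_nonneg (k : ℕ) (t : ℝ) : 0 ≤ rd k t := inv_nonneg.2 (vp_nonneg _ _)

lemma rd_meas (k : ℕ) : Measurable (rd k) :=
  ((cont_vp k).comp (cont_rt k)).measurable.inv

lemma rd_intervalIntegrable (k : ℕ) {b : ℝ} (hb : 0 < b) :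
    IntervalIntegrable (rd k) volume (-b) b := by
  have h1 : IntervalIntegrable (rd k) volume (-b) 0 := by
    refine intervalIntegral.intervalIntegrable_deriv_of_nonneg (g := rt k)
      (cont_rt k).continuousOn (fun x hx => hasDerivAt_rt k ?_) (fun x _ => rd_nonneg k x)
    have := hx.2
    rw [max_eq_right (by linarith)] at this
    exact this.ne
  have h2 : IntervalIntegrable (rd k) volume 0 b := by
    refine intervalIntegral.intervalIntegrable_deriv_of_nonneg (g := rt k)
      (cont_rt k).continuousOn (fun x hx => hasDerivAt_rt k ?_) (fun x _ => rd_nonneg k x)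
    have := hx.1
    rw [min_eq_left (by linarith)] at this
    exact this.ne'
  exact h1.trans h2

lemma rd_integrableOn (k : ℕ) {b : ℝ} (hb : 0 < b) : IntegrableOn (rd k) (Set.Ioo (-b) b) := by
  have := (intervalIntegrable_iff_integrableOn_Ioo_of_le (by linarith)).1
    (rd_intervalIntegrable k hb)
  exact this

lemma rd_integral (k : ℕ) {s : ℝ} (hs : 0 < s) :
    ∫ t in Set.Ioo (-(s ^ (2 * k + 5))) (s ^ (2 * k + 5)), rd k t = 2 * s := by
  have hb : 0 < s ^ (2 * k + 5) := by positivity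
  have := integral_eq_of_hasDerivAt_off_countable_of_le (rt k) (rd k)
    (a := -(s ^ (2 * k + 5))) (b := s ^ (2 * k + 5)) (by linarith)
    (Set.countable_singleton (0 : ℝ)) (cont_rt k).continuousOn
    (fun x hx => hasDerivAt_rt k (by simpa using hx.2)) (rd_intervalIntegrable k hb)
  rw [intervalIntegral.integral_of_le (by linarith), integral_Ioc_eq_integral_Ioo] at this
  rw [this, ← (odd_m k).neg_pow, pow_rt, pow_rt]
  ring

/-! ## Euclidean ingredients -/

/-- The open cube. -/
def cube (n : ℕ) (δ : ℝ) : Set (Euc n) := {x | ∀ i, x i ∈ Set.Ioo (-δ) δ}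

lemma map_cube {n : ℕ} (i : Fin n) (δ : ℝ) :
    ((volume : Measure (Euc n)).restrict (cube n δ)).map (fun x => x i) =
      ((ENNReal.ofReal (2 * δ)) ^ (n - 1)) • (volume : Measure ℝ).restrict (Set.Ioo (-δ) δ) := by
  have hmp := PiLp.volume_preserving_ofLp (Fin n)
  have hms : MeasurableSet (Set.univ.pi fun _ : Fin n => Set.Ioo (-δ) δ) :=
    MeasurableSet.univ_pi fun _ => measurableSet_Ioo
  have h1 := hmp.restrict_preimage hms
  have h2 : (WithLp.ofLp ⁻¹' (Set.univ.pi fun _ : Fin n => Set.Ioo (-δ) δ) : Set (Euc n))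
      = cube n δ := by
    ext x; simp [cube, Set.mem_pi]
  rw [h2] at h1
  have h3 : (fun x : Euc n => x i) = (Function.eval i) ∘ (WithLp.ofLp) := rfl
  rw [h3, ← Measure.map_map (measurable_pi_apply i) h1.measurable, h1.map_eq, volume_pi,
    Measure.restrict_pi_pi, Measure.pi_map_eval]
  congr 1
  simp only [Measure.restrict_apply_univ, Real.volume_Ioo, Finset.prod_const,
    Finset.card_erase_of_mem (Finset.mem_univ i), Finset.card_univ, Fintype.card_fin]
  ring_nf

lemma meas_coord {n : ℕ} (i : Fin n) : Measurable (fun x : Euc n => x i) := by fun_prop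

lemma cube_meas (n : ℕ) (δ : ℝ) : MeasurableSet (cube n δ) := by
  have : cube n δ = ⋂ i, (fun x : Euc n => x i) ⁻¹' (Set.Ioo (-δ) δ) := by
    ext x; simp [cube]
  rw [this]
  exact MeasurableSet.iInter fun i => (meas_coord i) measurableSet_Ioo

lemma cube_integrable {n : ℕ} (i : Fin n) (k : ℕ) {δ : ℝ} (hδ : 0 < δ) :
    IntegrableOn (fun x : Euc n => rd k (x i)) (cube n δ) := by
  have h : Integrable (rd k) (((volume : Measure (Euc n)).restrict (cube n δ)).map
      (fun x => x i)) := by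
    rw [map_cube]
    exact (rd_integrableOn k hδ).smul_measure (by finiteness)
  exact h.comp_measurable (meas_coord i)

lemma cube_integral {n : ℕ} (i : Fin n) (k : ℕ) {s : ℝ} (hs : 0 < s) :
    ∫ x in cube n (s ^ (2 * k + 5)), rd k (x i) = (2 * s ^ (2 * k + 5)) ^ (n - 1) * (2 * s) := by
  have h := integral_map (μ := (volume : Measure (Euc n)).restrict (cube n (s ^ (2 * k + 5))))
    (meas_coord i).aemeasurable (f := rd k) (rd_meas k).aestronglyMeasurable
  rw [← h, map_cube, integral_smul_measure, rd_integral k hs]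
  simp only [ENNReal.toReal_pow, smul_eq_mul]
  rw [ENNReal.toReal_ofReal (by positivity)]

lemma cube_sub {n : ℕ} (hn : 0 < n) {δ : ℝ} (hδ : 0 < δ) :
    cube n δ ⊆ ball (0 : Euc n) (n * δ) := by
  intro x hx
  rw [mem_ball_zero_iff]
  rw [EuclideanSpace.norm_eq, Real.sqrt_lt' (by positivity)]
  have h1 : ∀ i ∈ (Finset.univ : Finset (Fin n)), ‖x i‖ ^ 2 < δ ^ 2 := by
    intro i _
    have := abs_lt.2 (hx i)
    rw [Real.norm_eq_abs]
    have := abs_nonneg (x i)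
    gcongr
  have : Nonempty (Fin n) := ⟨⟨0, hn⟩⟩
  have h2 := Finset.sum_lt_sum_of_nonempty Finset.univ_nonempty h1
  simp at h2
  have hn1 : (1 : ℝ) ≤ n := by exact_mod_cast hn
  have h3 : n * δ ^ 2 ≤ (n * δ) ^ 2 := by
    have : 0 ≤ (n : ℝ) * (n - 1) * δ ^ 2 := by
      have : 0 ≤ (n : ℝ) - 1 := by linarith
      positivity
    nlinarith
  simp only [Real.norm_eq_abs, sq_abs]
  linarith

lemma ball_sub_cube {n : ℕ} : ball (0 : Euc n) 1 ⊆ cube n 1 := by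
  intro x hx i
  rw [mem_ball_zero_iff] at hx
  have := PiLp.norm_apply_le x i
  exact abs_lt.1 (lt_of_le_of_lt this hx)

/-- The unit vector. -/
abbrev ev {n : ℕ} (i : Fin n) : Euc n := EuclideanSpace.single i 1

lemma ae_ne {n : ℕ} (i : Fin n) : ∀ᵐ x : Euc n, x i ≠ 0 := by
  have h := Measure.addHaar_submodule (volume : Measure (Euc n))
    (LinearMap.ker (EuclideanSpace.proj i : Euc n →L[ℝ] ℝ).toLinearMap) (by
      intro h
      have : ev i ∈ (⊤ : Submodule ℝ (Euc n)) := trivial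
      rw [← h] at this
      simp at this)
  rw [ae_iff]
  convert h using 2
  ext x
  simp

lemma hasFDerivAt_coord {n : ℕ} (i : Fin n) {g : ℝ → ℝ} {g' : ℝ} {x : Euc n}
    (h : HasDerivAt g g' (x i)) :
    HasFDerivAt (fun x : Euc n => g (x i))
      (g' • (EuclideanSpace.proj i : Euc n →L[ℝ] ℝ)) x := by
  have h1 : HasFDerivAt (fun x : Euc n => x i)
    (EuclideanSpace.proj i : Euc n →L[ℝ] ℝ) x :=
    (EuclideanSpace.proj i : Euc n →L[ℝ] ℝ).hasFDerivAt
  exact h.comp_hasFDerivAt x h1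

lemma grad_u {n : ℕ} (i : Fin n) (k : ℕ) {x : Euc n} (hx : x i ≠ 0) :
    gradient (fun x : Euc n => rt k (x i)) x = rd k (x i) • ev i := by
  refine HasGradientAt.gradient ?_
  rw [hasGradientAt_iff_hasFDerivAt]
  refine (hasFDerivAt_coord i (hasDerivAt_rt k hx)).congr_fderiv ?_
  ext y
  simp [rd, EuclideanSpace.inner_single_left]

lemma ibp {n : ℕ} (i : Fin n) {g g' : ℝ → ℝ} (hg : ∀ t, HasDerivAt g (g' t) t)
    (hg' : Continuous g') {φ : Euc n → ℝ} (hφ : ContDiff ℝ 1 φ) (hc : HasCompactSupport φ) :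
    ∫ x : Euc n, g (x i) * fderiv ℝ φ x (ev i) = - ∫ x : Euc n, g' (x i) * φ x := by
  have hgc : Continuous g := continuous_iff_continuousAt.2 fun s => (hg s).continuousAt
  have hfd : ∀ x : Euc n, fderiv ℝ (fun x : Euc n => g (x i)) x (ev i) = g' (x i) := by
    intro x
    rw [(hasFDerivAt_coord i (hg (x i))).fderiv]
    simp
  have hdc : Continuous (fun x => fderiv ℝ φ x (ev i)) :=
    (hφ.continuous_fderiv one_ne_zero).clm_apply continuous_const
  have hdcs : HasCompactSupport (fun x => fderiv ℝ φ x (ev i)) := hc.fderiv_apply ℝ _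
  have hcoord : Continuous (fun x : Euc n => x i) := by fun_prop
  have h := integral_mul_fderiv_eq_neg_fderiv_mul_of_integrable (μ := (volume : Measure (Euc n)))
    (f := fun x : Euc n => g (x i)) (g := φ) (v := ev i) ?_ ?_ ?_ ?_ ?_
  · rw [h]
    simp only [hfd]
  · simp only [hfd]
    exact ((hg'.comp hcoord).mul hφ.continuous).integrable_of_hasCompactSupport hc.mul_left
  · exact ((hgc.comp hcoord).mul hdc).integrable_of_hasCompactSupport hdcs.mul_left
  · exact ((hgc.comp hcoord).mul hφ.continuous).integrable_of_hasCompactSupport hc.mul_left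
  · intro x _
    exact (hasFDerivAt_coord i (hg (x i))).differentiableAt
  · intro x _
    exact hφ.differentiable one_ne_zero x

lemma sqrt_rd (k : ℕ) {t : ℝ} (ht : t ≠ 0) :
    Real.sqrt (1 + rd k t ^ 2) = vW k (rt k t) / vp k (rt k t) := by
  have hV := vp_pos k (rt_ne k ht)
  have hW := vW_pos k (rt k t)
  rw [Real.sqrt_eq_iff_mul_self_eq_of_pos (by positivity)]
  have := vW_sq k (rt k t)
  unfold rd
  field_simp
  linarith

lemma rpow_rd (k : ℕ) {t : ℝ} (ht : t ≠ 0) :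
    (1 + rd k t ^ 2) ^ ((3 : ℝ) / 2) = (vW k (rt k t) / vp k (rt k t)) ^ 3 := by
  rw [← sqrt_rd k ht, Real.sqrt_eq_rpow, ← Real.rpow_natCast _ 3, ← Real.rpow_mul (by positivity)]
  norm_num

lemma norm_grad {n : ℕ} (ξ : Euc n → ℝ) (x : Euc n) : ‖gradient ξ x‖ = ‖fderiv ℝ ξ x‖ := by
  rw [← toDual_gradient, LinearIsometryEquiv.norm_map]

lemma norm_grad_u {n : ℕ} (i : Fin n) (k : ℕ) {x : Euc n} (hx : x i ≠ 0) :
    ‖gradient (fun x : Euc n => rt k (x i)) x‖ = rd k (x i) := by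
  rw [grad_u i k hx, norm_smul, Real.norm_of_nonneg (rd_nonneg _ _)]
  simp

lemma inner_grad_u {n : ℕ} (i : Fin n) (k : ℕ) {x : Euc n} (hx : x i ≠ 0) (ξ : Euc n → ℝ) :
    ⟪gradient (fun x : Euc n => rt k (x i)) x, gradient ξ x⟫ =
      rd k (x i) * fderiv ℝ ξ x (ev i) := by
  rw [grad_u i k hx, inner_smul_left, inner_gradient_right]
  simp

lemma weak_integrand {n : ℕ} (i : Fin n) (k : ℕ) {x : Euc n} (hx : x i ≠ 0) (φ : Euc n → ℝ) :
    ⟪gradient (fun x : Euc n => rt k (x i)) x, gradient φ x⟫ /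
      Real.sqrt (1 + ‖gradient (fun x : Euc n => rt k (x i)) x‖ ^ 2) =
    (vW k (rt k (x i)))⁻¹ * fderiv ℝ φ x (ev i) := by
  rw [inner_grad_u i k hx, norm_grad_u i k hx, sqrt_rd k hx]
  have hV := vp_pos k (rt_ne k hx)
  have hW := vW_pos k (rt k (x i))
  unfold rd
  field_simp

lemma stable_integrand {n : ℕ} (i : Fin n) (k : ℕ) {x : Euc n} (hx : x i ≠ 0)
    (ξ : Euc n → ℝ) :
    ‖gradient ξ x‖ ^ 2 / Real.sqrt (1 + ‖gradient (fun x : Euc n => rt k (x i)) x‖ ^ 2)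
        - ⟪gradient (fun x : Euc n => rt k (x i)) x, gradient ξ x⟫ ^ 2 /
          (1 + ‖gradient (fun x : Euc n => rt k (x i)) x‖ ^ 2) ^ ((3:ℝ)/2) =
    ‖fderiv ℝ ξ x‖ ^ 2 * (vp k (rt k (x i)) / vW k (rt k (x i))) -
      (fderiv ℝ ξ x (ev i)) ^ 2 * (vp k (rt k (x i)) / vW k (rt k (x i)) ^ 3) := by
  rw [inner_grad_u i k hx, norm_grad_u i k hx, sqrt_rd k hx, rpow_rd k hx, norm_grad]
  have hV := vp_pos k (rt_ne k hx)
  have hW := vW_pos k (rt k (x i))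
  unfold rd
  field_simp

lemma cont_coord {n : ℕ} (i : Fin n) : Continuous (fun x : Euc n => x i) := by fun_prop

lemma test_zero {n : ℕ} {Ω : Set (Euc n)} {φ : Euc n → ℝ} (h : tsupport φ ⊆ Ω) {x : Euc n}
    (hx : x ∉ Ω) : φ x = 0 ∧ fderiv ℝ φ x = 0 := by
  have h1 : x ∉ tsupport φ := fun h2 => hx (h h2)
  refine ⟨image_eq_zero_of_notMem_tsupport h1, ?_⟩
  by_contra h2
  exact h1 (support_fderiv_subset ℝ h2)

lemma u_weak {n : ℕ} (i : Fin n) (k : ℕ) :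
    IsWeakSolution (ball (0 : Euc n) 1) (nl k) (fun x => rt k (x i)) := by
  refine ⟨?_, ?_, ?_, ?_⟩
  · exact ((cont_rt k).comp (cont_coord i)).locallyIntegrable.locallyIntegrableOn _
  · have h1 : IntegrableOn (fun x : Euc n => rd k (x i)) (ball (0 : Euc n) 1) :=
      (cube_integrable i k one_pos).mono_set ball_sub_cube
    refine IntegrableOn.locallyIntegrableOn ?_
    refine Integrable.congr h1 (ae_restrict_of_ae ?_)
    filter_upwards [ae_ne i] with x hx
    rw [norm_grad_u i k hx]
  · exact ((cont_nl k).comp ((cont_rt k).comp (cont_coord i))).locallyIntegrable.locallyIntegrableOn _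
  · rintro φ ⟨hφ, hc, hs⟩
    have hφ1 : ContDiff ℝ 1 φ := hφ.of_le (by exact_mod_cast le_top)
    have e1 : ∫ x in ball (0 : Euc n) 1,
        ⟪gradient (fun x : Euc n => rt k (x i)) x, gradient φ x⟫ /
          Real.sqrt (1 + ‖gradient (fun x : Euc n => rt k (x i)) x‖ ^ 2) =
        ∫ x in ball (0 : Euc n) 1, (vW k (rt k (x i)))⁻¹ * fderiv ℝ φ x (ev i) := by
      refine integral_congr_ae (ae_restrict_of_ae ?_)
      filter_upwards [ae_ne i] with x hx
      exact weak_integrand i k hx φ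
    rw [e1, setIntegral_eq_integral_of_forall_compl_eq_zero
      (fun x hx => by simp [(test_zero hs hx).2]),
      setIntegral_eq_integral_of_forall_compl_eq_zero (fun x hx => by simp [(test_zero hs hx).1]),
      ibp i (hasDerivAt_comp_rt k (F := fun s => (vW k s)⁻¹) (P := fun s => -(nl k s))
        (hasDerivAt_Gam k) (cont_nl k).neg)
        ((cont_nl k).neg.comp (cont_rt k)) hφ1 hc, ← integral_neg]
    simp

lemma u_stable {n : ℕ} (i : Fin n) (k : ℕ) :
    IsStableSolution (ball (0 : Euc n) 1) (nl k) (fun x => rt k (x i)) := by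
  refine ⟨u_weak i k, ?_, ?_⟩
  · exact ((cont_dnl k).comp ((cont_rt k).comp
      (cont_coord i))).locallyIntegrable.locallyIntegrableOn _
  · rintro ξ ⟨hξ, hc, hs⟩
    have hξ1 : ContDiff ℝ 1 ξ := hξ.of_le (by exact_mod_cast le_top)
    have hsc : Continuous (fun x : Euc n => rt k (x i)) := (cont_rt k).comp (cont_coord i)
    have e1 : ∫ x in ball (0 : Euc n) 1,
        (‖gradient ξ x‖ ^ 2 / Real.sqrt (1 + ‖gradient (fun x : Euc n => rt k (x i)) x‖ ^ 2)
        - ⟪gradient (fun x : Euc n => rt k (x i)) x, gradient ξ x⟫ ^ 2 /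
          (1 + ‖gradient (fun x : Euc n => rt k (x i)) x‖ ^ 2) ^ ((3:ℝ)/2)) =
        ∫ x in ball (0 : Euc n) 1,
          (‖fderiv ℝ ξ x‖ ^ 2 * (vp k (rt k (x i)) / vW k (rt k (x i))) -
      (fderiv ℝ ξ x (ev i)) ^ 2 * (vp k (rt k (x i)) / vW k (rt k (x i)) ^ 3)) := by
      refine integral_congr_ae (ae_restrict_of_ae ?_)
      filter_upwards [ae_ne i] with x hx
      exact stable_integrand i k hx ξ
    rw [e1, setIntegral_eq_integral_of_forall_compl_eq_zero
      (fun x hx => by simp [(test_zero hs hx).1]),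
      setIntegral_eq_integral_of_forall_compl_eq_zero
      (fun x hx => by simp [(test_zero hs hx).2])]
    have hdc : Continuous (fun x => fderiv ℝ ξ x) := hξ1.continuous_fderiv one_ne_zero
    have hDc : Continuous (fun x => fderiv ℝ ξ x (ev i)) := hdc.clm_apply continuous_const
    have hPc : Continuous (fun s => deriv (nl k) s + vq k s / vW k s ^ 3) :=
      (cont_dnl k).add ((cont_vq k).div ((cont_vW k).pow 3)
        (fun x => (pow_pos (vW_pos k x) 3).ne'))
    have hξ2 : ContDiff ℝ 1 (fun x => ξ x ^ 2) := hξ1.pow 2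
    have hc2 : HasCompactSupport (fun x => ξ x ^ 2) := by
      refine hc.mono ?_
      intro x hx
      simpa using hx
    have hcz : ∀ (F : Euc n → ℝ), Continuous F →
        (∀ x, ξ x = 0 → fderiv ℝ ξ x = 0 → F x = 0) → Integrable F := by
      intro F hF h0
      refine hF.integrable_of_hasCompactSupport ?_
      refine HasCompactSupport.intro' hc (isClosed_tsupport ξ) ?_
      intro x hx
      obtain ⟨a, b⟩ := test_zero (subset_rfl (a := tsupport ξ)) hx
      exact h0 x a b
    have hfd : ∀ x, fderiv ℝ (fun x => ξ x ^ 2) x (ev i) = 2 * ξ x * fderiv ℝ ξ x (ev i) := by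
      intro x
      have := ((hξ1.differentiable one_ne_zero x).hasFDerivAt.pow 2).fderiv
      rw [this]
      simp
    have hib := ibp i (hasDerivAt_comp_rt k (hasDerivAt_H k) hPc) (hPc.comp (cont_rt k)) hξ2 hc2
    simp only [hfd] at hib
    have hI1 : Integrable (fun x : Euc n => deriv (nl k) (rt k (x i)) * ξ x ^ 2) := by
      refine hcz _ (((cont_dnl k).comp hsc).mul (hξ1.continuous.pow 2)) ?_
      intro x h _; simp [h]
    have hI2 : Integrable (fun x : Euc n =>
        (‖fderiv ℝ ξ x‖ ^ 2 * (vp k (rt k (x i)) / vW k (rt k (x i))) -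
      (fderiv ℝ ξ x (ev i)) ^ 2 * (vp k (rt k (x i)) / vW k (rt k (x i)) ^ 3))) := by
      refine hcz _ ?_ ?_
      · refine ((hdc.norm.pow 2).mul (((cont_vp k).comp hsc).div ((cont_vW k).comp hsc) ?_)).sub
          ((hDc.pow 2).mul (((cont_vp k).comp hsc).div (((cont_vW k).comp hsc).pow 3) ?_))
        · intro x; exact (vW_pos k _).ne'
        · intro x; exact (pow_pos (vW_pos k _) 3).ne'
      · intro x _ h; simp [h]
    have hI3 : Integrable (fun x : Euc n =>
        (deriv (nl k) (rt k (x i)) + vq k (rt k (x i)) / vW k (rt k (x i)) ^ 3) * ξ x ^ 2) := by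
      refine hcz _ ((hPc.comp hsc).mul (hξ1.continuous.pow 2)) ?_
      intro x h _; simp [h]
    have hI4 : Integrable (fun x : Euc n =>
        nl k (rt k (x i)) * vp k (rt k (x i)) * (2 * ξ x * fderiv ℝ ξ x (ev i))) := by
      refine hcz _ ((((cont_nl k).comp hsc).mul ((cont_vp k).comp hsc)).mul
        ((continuous_const.mul hξ1.continuous).mul hDc)) ?_
      intro x h _; simp [h]
    have hmono := integral_mono hI1 (hI2.add (hI3.add hI4)) (fun x => by
      refine key_ineq k (rt k (x i)) (ξ x) (fderiv ℝ ξ x (ev i)) (‖fderiv ℝ ξ x‖ ^ 2) ?_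
      have h1 := (fderiv ℝ ξ x).le_opNorm (ev i)
      have h2 : ‖ev i‖ = 1 := by simp
      rw [h2, mul_one] at h1
      rw [← sq_abs]
      exact pow_le_pow_left₀ (abs_nonneg _) h1 2)
    rw [integral_add' hI2 (hI3.add hI4), integral_add' hI3 hI4, hib] at hmono
    linarith

lemma u_morrey {n : ℕ} (hn : 2 ≤ n) (i : Fin n) (k : ℕ) {α : ℝ} (hα : 0 < α)
    (hk : (n + α) / α < k) :
    ¬ MemMorrey (ball (0 : Euc n) 1) ((n : ℝ) + α)
      (fun x => gradient (fun x : Euc n => rt k (x i)) x) := by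
  rintro ⟨K, hK, h⟩
  have hn0 : (0 : ℝ) < n := by exact_mod_cast (by omega : 0 < n)
  set e : ℝ := (n : ℝ) * (1 - 1 / ((n : ℝ) + α)) with he
  set m : ℕ := 2 * k + 5 with hm
  set γ : ℝ := m * e - (m * (n - 1 : ℕ) + 1 : ℕ) with hγ
  have hγpos : 0 < γ := by
    have h1 : γ = m * (α / (n + α)) - 1 := by
      rw [hγ, he]
      push_cast [Nat.cast_sub (by omega : 1 ≤ n)]
      field_simp
      ring
    have h2 : (n + α) / α < m := by
      refine hk.trans_le ?_
      rw [hm]; push_cast; linarith [(Nat.cast_nonneg k : (0 : ℝ) ≤ k)]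
    rw [div_lt_iff₀ hα] at h2
    rw [h1, sub_pos, ← mul_div_assoc, lt_div_iff₀ (by positivity)]
    linarith
  have hev : ∀ᶠ s : ℝ in 𝓝[>] 0, K * n ^ e * s ^ γ < 2 ^ n := by
    have h1 : Tendsto (fun s : ℝ => K * n ^ e * s ^ γ) (𝓝[>] 0) (𝓝 (K * n ^ e * 0 ^ γ)) :=
      (((Real.continuous_rpow_const hγpos.le).tendsto 0).const_mul _).mono_left
        nhdsWithin_le_nhds
    rw [Real.zero_rpow hγpos.ne', mul_zero] at h1
    exact h1.eventually (gt_mem_nhds (by positivity))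
  have hev2 : ∀ᶠ s : ℝ in 𝓝[>] 0, n * s ^ m < 1 := by
    have h1 : Tendsto (fun s : ℝ => (n : ℝ) * s ^ m) (𝓝[>] 0) (𝓝 (n * 0 ^ m)) :=
      (((continuous_pow m).tendsto 0).const_mul _).mono_left nhdsWithin_le_nhds
    rw [zero_pow (by omega), mul_zero] at h1
    exact h1.eventually (gt_mem_nhds one_pos)
  obtain ⟨s, ⟨hs1, hs2⟩, hs⟩ := ((hev.and hev2).and self_mem_nhdsWithin).exists
  have hs : 0 < s := hs
  have hsm : 0 < s ^ m := by positivity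
  have hdiam : (n : ℝ) * s ^ m ≤ diam (ball (0 : Euc n) 1) := by
    refine hs2.le.trans ?_
    have h1 : (2⁻¹ : ℝ) • ev i ∈ ball (0 : Euc n) 1 := by
      rw [mem_ball_zero_iff, norm_smul]; norm_num
    have h2 : (-2⁻¹ : ℝ) • ev i ∈ ball (0 : Euc n) 1 := by
      rw [mem_ball_zero_iff, norm_smul]; norm_num
    have h3 := dist_le_diam_of_mem isBounded_ball h1 h2
    rw [dist_eq_norm, ← sub_smul, norm_smul] at h3
    norm_num at h3
    exact h3
  have key := h 0 (mem_ball_self one_pos) (n * s ^ m) (by positivity) hdiam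
  have hsub : cube n (s ^ m) ⊆ ball (0 : Euc n) (n * s ^ m) ∩ ball 0 1 := by
    refine Set.subset_inter (cube_sub (by omega) hsm) ?_
    exact (cube_sub (by omega) hsm).trans (ball_subset_ball hs2.le)
  have e1 : ∫ x in ball (0 : Euc n) (n * s ^ m) ∩ ball 0 1,
      ‖gradient (fun x : Euc n => rt k (x i)) x‖ =
      ∫ x in ball (0 : Euc n) (n * s ^ m) ∩ ball 0 1, rd k (x i) := by
    refine integral_congr_ae (ae_restrict_of_ae ?_)
    filter_upwards [ae_ne i] with x hx
    exact norm_grad_u i k hx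
  rw [e1] at key
  have hle := setIntegral_mono_set
    ((cube_integrable i k one_pos).mono_set
      (Set.inter_subset_right.trans ball_sub_cube :
        ball (0 : Euc n) (n * s ^ m) ∩ ball 0 1 ⊆ cube n 1))
    (Eventually.of_forall fun x => rd_nonneg k _) hsub.eventuallyLE
  rw [cube_integral i k hs] at hle
  have hfin := hle.trans key
  rw [← hm, Real.mul_rpow hn0.le hsm.le, ← Real.rpow_natCast s m, ← Real.rpow_mul hs.le] at hfin
  have h5 : (m : ℝ) * e = γ + (m * (n - 1 : ℕ) + 1 : ℕ) := by rw [hγ]; ring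
  rw [h5, Real.rpow_add hs, Real.rpow_natCast, Real.rpow_natCast] at hfin
  have h6 : (2 * s ^ m) ^ (n - 1) * (2 * s) = 2 ^ n * s ^ (m * (n - 1) + 1) := by
    obtain ⟨p, rfl⟩ : ∃ p, n = p + 1 := ⟨n - 1, by omega⟩
    simp only [Nat.add_sub_cancel]
    rw [mul_pow, ← pow_mul]; ring
  rw [h6] at hfin
  have h7 : 0 < s ^ (m * (n - 1) + 1) := by positivity
  have h8 := mul_lt_mul_of_pos_right hs1 h7
  linarith

/-- **Theorem (Optimality of the Morrey exponent in low dimensions).**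
For `n ≥ 2` and `α > 0` there exist a nonlinearity `f ∈ C¹(ℝ)` and a one-dimensional
stable solution `u` of `div(∇u/√(1+|∇u|²)) = -f(u)` in `B₁ ⊂ ℝⁿ` (i.e. `u` depends only
on the variable `x₁`) such that `∇u ∉ M^{n+α}(B₁)`. -/
theorem stmt_1 (n : ℕ) (hn : 2 ≤ n) (α : ℝ) (hα : 0 < α) :
    ∃ (f : ℝ → ℝ) (u : Euc n → ℝ),
      ContDiff ℝ 1 f ∧
      (∃ g : ℝ → ℝ, ∀ x : Euc n, u x = g (x ⟨0, by omega⟩)) ∧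
      IsStableSolution (ball (0 : Euc n) 1) f u ∧
      ¬ MemMorrey (ball (0 : Euc n) 1) ((n : ℝ) + α) (fun x => gradient u x) := by
  obtain ⟨k, hk⟩ := exists_nat_gt (((n : ℝ) + α) / α)
  have h0 : 0 < n := by omega
  have h1 := u_stable (n := n) ⟨0, h0⟩ k
  have h2 := u_morrey hn ⟨0, h0⟩ k hα hk
  refine ⟨nl k, fun x => rt k (x ⟨0, h0⟩), contDiff_nl k, ⟨rt k, fun x => rfl⟩, h1, h2⟩
end
end

section
/- Let n ≥ 2, f ∈ C¹(ℝ), and let u ∈ W^{3,1}_loc(B₂) be a stable solution of div(∇u/√(1+|∇u|²)) = −f(u) in B₂ ⊂ ℝⁿ. Assume that u is radially symmetric with respect to the origin. Then for every α ∈ (0,1) there exists a constant K = K(n,α) such that ∫_{B_ρ(0)} |∇u| dx ≤ K ρ^{n−1+α} for all 0 < ρ < 1. -/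
open MeasureTheory Metric Real Filter Asymptotics Bornology
open scoped RealInnerProductSpace Topology

noncomputable section

lemma compact_in_Ioo (K : Set ℝ) (hK : IsCompact K) (h : K ⊆ Set.Ioo 0 2) :
    ∃ a b : ℝ, 0 < a ∧ a < b ∧ b < 2 ∧ K ⊆ Set.Ioo a b := by
  have hK' : IsCompact (insert 1 K) := hK.insert 1
  have hs : insert 1 K ⊆ Set.Ioo (0:ℝ) 2 := by
    intro x hx
    rcases hx with rfl | hx
    · norm_num
    · exact h hx
  obtain ⟨l, hl⟩ := hK'.exists_isLeast ⟨1, by simp⟩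
  obtain ⟨M, hM⟩ := hK'.exists_isGreatest ⟨1, by simp⟩
  have h1 := hs hl.1
  have h2 := hs hM.1
  have h3 := hl.2 (show (1:ℝ) ∈ insert 1 K by simp)
  have h4 := hM.2 (show (1:ℝ) ∈ insert 1 K by simp)
  refine ⟨l / 2, (M + 2) / 2, by linarith [h1.1], by linarith [h1.1], by linarith [h2.2], ?_⟩
  intro x hx
  have h5 := hl.2 (show x ∈ insert 1 K by simp [hx])
  have h6 := hM.2 (show x ∈ insert 1 K by simp [hx])
  exact ⟨by linarith [h1.1], by linarith [h2.2]⟩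

lemma sqrt_one_add_pos (t : ℝ) : 0 < √(1 + t ^ 2) := Real.sqrt_pos.2 (by positivity)

lemma hasDerivAt_q (p : ℝ → ℝ) (p' r : ℝ) (h : HasDerivAt p p' r) :
    HasDerivAt (fun s => p s / √(1 + p s ^ 2)) (p' / √(1 + p r ^ 2) ^ 3) r := by
  have h0 := sqrt_one_add_pos (p r)
  have h1 : HasDerivAt (fun s => 1 + p s ^ 2) (2 * p r * p') r := by
    have := (h.pow 2).const_add 1
    simpa using this
  have h2 := h.div (h1.sqrt (by positivity)) h0.ne'
  refine h2.congr_deriv (Eq.symm ?_)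
  have hs : √(1 + p r ^ 2) ^ 2 = 1 + p r ^ 2 := Real.sq_sqrt (by positivity)
  have key : ∀ s t q : ℝ, 0 < s → s ^ 2 = 1 + t ^ 2 →
      q / s ^ 3 = (q * s - t * (2 * t * q / (2 * s))) / s ^ 2 := by
    intro s t q hs0 h
    have e : q * s - t * (2 * t * q / (2 * s)) = q / s := by
      field_simp
      linear_combination q * h
    rw [e]; field_simp
  exact key _ _ _ h0 hs

structure Rad (m : ℕ) (f G p p' : ℝ → ℝ) : Prop where
  hf : ContDiff ℝ 1 f
  hG : ∀ r ∈ Set.Ioo (0:ℝ) 2, HasDerivAt G (p r) r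
  hp : ∀ r ∈ Set.Ioo (0:ℝ) 2, HasDerivAt p (p' r) r
  hp' : ContinuousOn p' (Set.Ioo (0:ℝ) 2)
  weak : ∀ (h : ℝ → ℝ) (a b : ℝ), 0 < a → a < b → b < 2 → ContDiff ℝ (⊤ : ℕ∞) h →
    (∀ r, r ∉ Set.Ioo a b → h r = 0) →
    ∫ r in a..b, r ^ (m + 1) * (p r * deriv h r / √(1 + p r ^ 2))
      = ∫ r in a..b, r ^ (m + 1) * (f (G r) * h r)
  stab : ∀ (h : ℝ → ℝ) (a b : ℝ), 0 < a → a < b → b < 2 → ContDiff ℝ (⊤ : ℕ∞) h →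
    (∀ r, r ∉ Set.Ioo a b → h r = 0) →
    ∫ r in a..b, r ^ (m + 1) * (deriv f (G r) * h r ^ 2)
      ≤ ∫ r in a..b, r ^ (m + 1) * (deriv h r ^ 2 / √(1 + p r ^ 2) ^ 3)

section
variable {m : ℕ} {f G p p' : ℝ → ℝ}

lemma Rad.cG (H : Rad m f G p p') : ContinuousOn G (Set.Ioo (0:ℝ) 2) := fun r hr => (H.hG r hr).continuousAt.continuousWithinAt
lemma Rad.cp (H : Rad m f G p p') : ContinuousOn p (Set.Ioo (0:ℝ) 2) := fun r hr => (H.hp r hr).continuousAt.continuousWithinAt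
lemma Rad.cfG (H : Rad m f G p p') : ContinuousOn (fun r => f (G r)) (Set.Ioo (0:ℝ) 2) :=
  H.hf.continuous.comp_continuousOn H.cG
lemma Rad.cf'G (H : Rad m f G p p') : ContinuousOn (fun r => deriv f (G r)) (Set.Ioo (0:ℝ) 2) :=
  (H.hf.continuous_deriv le_rfl).comp_continuousOn H.cG
lemma Rad.cs (H : Rad m f G p p') : ContinuousOn (fun r => √(1 + p r ^ 2)) (Set.Ioo (0:ℝ) 2) :=
  (continuousOn_const.add (H.cp.pow 2)).sqrt
lemma Rad.cq (H : Rad m f G p p') : ContinuousOn (fun r => p r / √(1 + p r ^ 2)) (Set.Ioo (0:ℝ) 2) :=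
  H.cp.div H.cs fun _ _ => (sqrt_one_add_pos _).ne'
lemma Rad.cq' (H : Rad m f G p p') : ContinuousOn (fun r => p' r / √(1 + p r ^ 2) ^ 3) (Set.Ioo (0:ℝ) 2) :=
  H.hp'.div (H.cs.pow 3) fun _ _ => (pow_pos (sqrt_one_add_pos _) 3).ne'
lemma Rad.ck (H : Rad m f G p p') : ContinuousOn (fun r => 1 / √(1 + p r ^ 2) ^ 3) (Set.Ioo (0:ℝ) 2) :=
  continuousOn_const.div (H.cs.pow 3) fun _ _ => (pow_pos (sqrt_one_add_pos _) 3).ne'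

lemma Rad.ode (H : Rad m f G p p') : ∀ r ∈ Set.Ioo (0:ℝ) 2,
    p' r / √(1 + p r ^ 2) ^ 3 + (m + 1) * (p r / √(1 + p r ^ 2)) / r + f (G r) = 0 := by
  set E : ℝ → ℝ := fun r => ((m + 1) * r ^ m * (p r / √(1 + p r ^ 2))
    + r ^ (m + 1) * (p' r / √(1 + p r ^ 2) ^ 3)) + r ^ (m + 1) * f (G r) with hE
  have cE : ContinuousOn E (Set.Ioo (0:ℝ) 2) := by
    have h1 := H.cq
    have h2 := H.cq'
    have h3 := H.cfG
    exact (((by fun_prop : ContinuousOn (fun r : ℝ => (m + 1) * r ^ m) _).mul h1).add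
      ((continuousOn_pow _).mul h2)).add ((continuousOn_pow _).mul h3)
  have key : ∀ᵐ x ∂(volume : Measure ℝ), x ∈ Set.Ioo (0:ℝ) 2 → E x = 0 := by
    apply isOpen_Ioo.ae_eq_zero_of_integral_contDiff_smul_eq_zero
    · exact cE.locallyIntegrableOn measurableSet_Ioo
    · intro h hh hc hs
      obtain ⟨a, b, ha, hab, hb, hK⟩ := compact_in_Ioo _ hc.isCompact hs
      have hz : ∀ r, r ∉ Set.Ioo a b → h r = 0 := fun r hr =>
        image_eq_zero_of_notMem_tsupport fun h' => hr (hK h')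
      have hsub : Set.uIcc a b ⊆ Set.Ioo (0:ℝ) 2 := by
        rw [Set.uIcc_of_le hab.le]
        exact fun x hx => ⟨by linarith [hx.1], by linarith [hx.2]⟩
      have hw := H.weak h a b ha hab hb hh hz
      have ch : Continuous h := hh.continuous
      have ch' : Continuous (deriv h) := hh.continuous_deriv (by simp)
      have cE' := cE.mono hsub
      have cq := H.cq.mono hsub
      have cf := H.cfG.mono hsub
      have cq2 : ContinuousOn (fun r => r ^ (m+1) * (p r * deriv h r / √(1 + p r ^ 2))) (Set.uIcc a b) :=
        ((continuousOn_pow (m+1)).mul (cq.mul ch'.continuousOn)).congr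
          fun r _ => by simp only [Pi.mul_apply]; ring
      have cf2 : ContinuousOn (fun r => r ^ (m+1) * (f (G r) * h r)) (Set.uIcc a b) :=
        (continuousOn_pow (m+1)).mul (cf.mul ch.continuousOn)
      have cE2 : ContinuousOn (fun r => h r • E r) (Set.uIcc a b) := ch.continuousOn.mul cE'
      rw [← intervalIntegral.integral_eq_integral_of_support_subset (a := a) (b := b)]
      swap
      · intro x hx
        by_contra hx'
        apply hx
        simp [hz x fun h' => hx' (Set.Ioo_subset_Ioc_self h')]
      have e1 : ∫ r in a..b, (h r • E r + (r ^ (m + 1) * (p r * deriv h r / √(1 + p r ^ 2)) -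
          r ^ (m + 1) * (f (G r) * h r))) = 0 := by
        rw [intervalIntegral.integral_eq_sub_of_hasDerivAt
          (f := fun r => r ^ (m+1) * (p r / √(1 + p r ^ 2)) * h r)]
        · simp [hz a (by simp), hz b (by simp)]
        · intro r hr
          have h1 := (((hasDerivAt_pow (m+1) r).mul (hasDerivAt_q p _ r (H.hp r (hsub hr)))).mul
            (hh.differentiable (by simp) r).hasDerivAt)
          refine h1.congr_deriv (Eq.symm ?_)
          simp only [hE, smul_eq_mul]
          push_cast
          simp only [Pi.mul_apply]
          ring
        · exact (cE2.add (cq2.sub cf2)).intervalIntegrable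
      rw [intervalIntegral.integral_add, intervalIntegral.integral_sub, hw, sub_self, add_zero] at e1
      · exact e1
      · exact cq2.intervalIntegrable
      · exact cf2.intervalIntegrable
      · exact cE2.intervalIntegrable
      · exact (cq2.sub cf2).intervalIntegrable
  have h0 : Set.EqOn E (fun _ => 0) (Set.Ioo (0:ℝ) 2) := by
    apply Measure.eqOn_open_of_ae_eq (μ := volume) _ isOpen_Ioo cE continuousOn_const
    exact (ae_restrict_iff' measurableSet_Ioo).2 key
  intro r hr
  have h1 := h0 hr
  simp only [hE] at h1
  have hr0 : 0 < r := hr.1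
  have h2 : r ^ (m+1) * (p' r / √(1 + p r ^ 2) ^ 3 + (m + 1) * (p r / √(1 + p r ^ 2)) / r + f (G r))
      = 0 := by
    rw [← h1]
    generalize p r / √(1 + p r ^ 2) = q
    generalize p' r / √(1 + p r ^ 2) ^ 3 = q'
    field_simp
    ring
  exact (mul_eq_zero.1 h2).resolve_left (by positivity)

lemma Rad.stab' (H : Rad m f G p p') (η : ℝ → ℝ) (a b : ℝ) (ha : 0 < a) (hab : a < b) (hb : b < 2)
    (hη : ContDiff ℝ (⊤ : ℕ∞) η) (hz : ∀ r, r ∉ Set.Ioo a b → η r = 0) :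
    ∫ r in a..b, r ^ (m + 1) * (deriv f (G r) * (p r * η r) ^ 2)
      ≤ ∫ r in a..b, r ^ (m + 1) * ((p' r * η r + p r * deriv η r) ^ 2 / √(1 + p r ^ 2) ^ 3) := by
  have hsub : Set.Icc a b ⊆ Set.Ioo (0:ℝ) 2 :=
    fun x hx => ⟨by linarith [hx.1], by linarith [hx.2]⟩
  have hu : Set.uIcc a b = Set.Icc a b := Set.uIcc_of_le hab.le
  have hu' : Set.uIoc a b ⊆ Set.Icc a b := by
    rw [Set.uIoc_of_le hab.le]; exact Set.Ioc_subset_Icc_self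
  have cp' := H.hp'.mono hsub
  have cp := H.cp.mono hsub
  have cf := H.cf'G.mono hsub
  have ck := H.ck.mono hsub
  have cη : Continuous η := hη.continuous
  have cη' : Continuous (deriv η) := hη.continuous_deriv (by simp)
  -- approximations
  have hP : ∀ k : ℕ, ∃ Q Q' : ℝ → ℝ, ContDiff ℝ (⊤ : ℕ∞) Q ∧ (∀ r, HasDerivAt Q (Q' r) r) ∧
      Continuous Q' ∧
      (∀ r ∈ Set.Icc a b, |Q' r - p' r| ≤ 1 / ((k:ℝ) + 1)) ∧
      (∀ r ∈ Set.Icc a b, |Q r - p r| ≤ 2 * (1 / ((k:ℝ) + 1))) := by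
    intro k
    obtain ⟨P, hP⟩ := exists_polynomial_near_of_continuousOn a b p' cp' (1 / ((k:ℝ)+1)) (by positivity)
    have hd : ∀ r, HasDerivAt (fun r => p a + ∫ t in a..r, P.eval t) (P.eval r) r := fun r =>
      (intervalIntegral.integral_hasDerivAt_right (P.continuous.intervalIntegrable _ _)
        (P.continuous.stronglyMeasurableAtFilter _ _) P.continuous.continuousAt).const_add _
    refine ⟨fun r => p a + ∫ t in a..r, P.eval t, fun r => P.eval r, ?_, hd, P.continuous,
      fun r hr => (hP r hr).le, ?_⟩
    · apply contDiff_infty_iff_deriv.2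
      refine ⟨fun r => (hd r).differentiableAt, ?_⟩
      rw [show deriv _ = fun r => P.eval r from funext fun r => (hd r).deriv]
      simpa using P.contDiff_aeval (R := ℝ) (𝕜 := ℝ) (⊤ : ℕ∞)
    · intro r hr
      have hsr : Set.uIcc a r ⊆ Set.Icc a b := by
        rw [Set.uIcc_of_le hr.1]; exact Set.Icc_subset_Icc_right hr.2
      have e : p r - p a = ∫ t in a..r, p' t := by
        rw [intervalIntegral.integral_eq_sub_of_hasDerivAt
          (fun x hx => H.hp x (hsub (hsr hx))) (cp'.mono hsr).intervalIntegrable]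
      have e2 : (p a + ∫ t in a..r, P.eval t) - p r = ∫ t in a..r, (P.eval t - p' t) := by
        rw [intervalIntegral.integral_sub (P.continuous.intervalIntegrable _ _)
          (cp'.mono hsr).intervalIntegrable, ← e]; ring
      rw [e2, ← Real.norm_eq_abs]
      have := intervalIntegral.norm_integral_le_of_norm_le_const (a := a) (b := r)
        (f := fun t => P.eval t - p' t) (C := 1 / ((k:ℝ)+1))
        (fun x hx => (hP x (hsr (Set.uIoc_subset_uIcc hx))).le)
      refine this.trans ?_
      rw [mul_comm]
      gcongr
      rw [abs_of_nonneg (by linarith [hr.1])]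
      linarith [hr.2]
  choose Q Q' hQ hQd hQc hQ1 hQ2 using hP
  have hlim0 : Tendsto (fun k : ℕ => 1 / ((k:ℝ) + 1)) atTop (𝓝 0) :=
    tendsto_one_div_add_atTop_nhds_zero_nat
  have hle1 : ∀ k : ℕ, 1 / ((k:ℝ) + 1) ≤ 1 := fun k => by
    rw [div_le_one (by positivity)]; linarith [(Nat.cast_nonneg k : (0:ℝ) ≤ k)]
  have hlQ' : ∀ r ∈ Set.Icc a b, Tendsto (fun k => Q' k r) atTop (𝓝 (p' r)) := fun r hr => by
    rw [tendsto_iff_norm_sub_tendsto_zero]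
    exact squeeze_zero (fun _ => norm_nonneg _) (fun k => hQ1 k r hr) hlim0
  have hlQ : ∀ r ∈ Set.Icc a b, Tendsto (fun k => Q k r) atTop (𝓝 (p r)) := fun r hr => by
    rw [tendsto_iff_norm_sub_tendsto_zero]
    refine squeeze_zero (fun _ => norm_nonneg _) (fun k => hQ2 k r hr) ?_
    simpa using hlim0.const_mul 2
  have hbQ : ∀ k, ∀ r ∈ Set.Icc a b, |Q k r| ≤ |p r| + 2 := fun k r hr => by
    have h1 := hQ2 k r hr
    have h2 := hle1 k
    have h3 := abs_sub_abs_le_abs_sub (Q k r) (p r)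
    linarith
  have hbQ' : ∀ k, ∀ r ∈ Set.Icc a b, |Q' k r| ≤ |p' r| + 1 := fun k r hr => by
    have h1 := hQ1 k r hr
    have h2 := hle1 k
    have h3 := abs_sub_abs_le_abs_sub (Q' k r) (p' r)
    linarith
  have hQcc : ∀ k, Continuous (Q k) := fun k => (hQ k).continuous
  have hder : ∀ k r, deriv (fun r => Q k r * η r) r = Q' k r * η r + Q k r * deriv η r :=
    fun k r => ((hQd k r).mul (hη.differentiable (by simp) r).hasDerivAt).deriv
  have hst : ∀ k, ∫ r in a..b, r ^ (m + 1) * (deriv f (G r) * (Q k r * η r) ^ 2)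
      ≤ ∫ r in a..b, r ^ (m + 1) * ((Q' k r * η r + Q k r * deriv η r) ^ 2 *
        (1 / √(1 + p r ^ 2) ^ 3)) := by
    intro k
    have := H.stab (fun r => Q k r * η r) a b ha hab hb ((hQ k).mul hη)
      (fun r hr => by simp [hz r hr])
    simp only [hder] at this
    simpa only [mul_one_div] using this
  simp only [← mul_one_div ((p' _ * η _ + p _ * deriv η _) ^ 2)]
  refine le_of_tendsto_of_tendsto' (b := atTop) ?_ ?_ hst
  · apply intervalIntegral.tendsto_integral_filter_of_dominated_convergence
      (fun r => |r ^ (m + 1)| * (|deriv f (G r)| * ((|p r| + 2) * |η r|) ^ 2))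
    · refine Eventually.of_forall fun k => ContinuousOn.aestronglyMeasurable ?_ measurableSet_uIoc
      refine ContinuousOn.mono ?_ hu'
      have := hQcc k
      fun_prop
    · refine Eventually.of_forall fun k => Eventually.of_forall fun r hr => ?_
      simp only [norm_mul, Real.norm_eq_abs, norm_pow]
      rw [abs_pow]
      have := hbQ k r (hu' hr)
      gcongr
    · apply ContinuousOn.intervalIntegrable
      rw [hu]
      fun_prop
    · refine Eventually.of_forall fun r hr => ?_
      exact ((((hlQ r (hu' hr)).mul_const _).pow 2).const_mul _).const_mul _
  · apply intervalIntegral.tendsto_integral_filter_of_dominated_convergence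
      (fun r => |r ^ (m + 1)| * (((|p' r| + 1) * |η r| + (|p r| + 2) * |deriv η r|) ^ 2 *
        |1 / √(1 + p r ^ 2) ^ 3|))
    · refine Eventually.of_forall fun k => ContinuousOn.aestronglyMeasurable ?_ measurableSet_uIoc
      refine ContinuousOn.mono ?_ hu'
      have := hQcc k
      have := hQc k
      fun_prop
    · refine Eventually.of_forall fun k => Eventually.of_forall fun r hr => ?_
      rw [norm_mul, norm_mul, norm_pow (Q' k r * η r + Q k r * deriv η r), Real.norm_eq_abs,
        Real.norm_eq_abs, Real.norm_eq_abs]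
      have h1 := hbQ k r (hu' hr)
      have h2 := hbQ' k r (hu' hr)
      have h3 : |Q' k r * η r + Q k r * deriv η r|
          ≤ (|p' r| + 1) * |η r| + (|p r| + 2) * |deriv η r| := by
        refine (abs_add_le _ _).trans ?_
        rw [abs_mul, abs_mul]
        gcongr
      gcongr
    · apply ContinuousOn.intervalIntegrable
      rw [hu]
      fun_prop
    · refine Eventually.of_forall fun r hr => ?_
      have h1 := hlQ r (hu' hr)
      have h2 := hlQ' r (hu' hr)
      exact ((((h2.mul_const _).add (h1.mul_const _)).pow 2).mul_const _).const_mul _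

lemma Rad.main (H : Rad m f G p p') (η : ℝ → ℝ) (a b : ℝ) (ha : 0 < a) (hab : a < b) (hb : b < 2)
    (hη : ContDiff ℝ (⊤ : ℕ∞) η) (hz : ∀ r, r ∉ Set.Ioo a b → η r = 0) :
    ∫ r in a..b, (m + 1) * (r ^ (m + 1) * (p r / √(1 + p r ^ 2) * p r * (η r ^ 2 / r ^ 2)))
      ≤ ∫ r in a..b, r ^ (m + 1) * (1 / √(1 + p r ^ 2) ^ 3 * p r ^ 2 * deriv η r ^ 2) := by
  have hst := H.stab' η a b ha hab hb hη hz
  have hsub : Set.uIcc a b ⊆ Set.Ioo (0:ℝ) 2 := by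
    rw [Set.uIcc_of_le hab.le]
    exact fun x hx => ⟨by linarith [hx.1], by linarith [hx.2]⟩
  have cp' := H.hp'.mono hsub
  have cp := H.cp.mono hsub
  have cf := H.cf'G.mono hsub
  have ck := H.ck.mono hsub
  have cq := H.cq.mono hsub
  have cη : Continuous η := hη.continuous
  have cη' : Continuous (deriv η) := hη.continuous_deriv (by simp)
  have ci : ContinuousOn (fun r : ℝ => η r ^ 2 / r ^ 2) (Set.uIcc a b) :=
    ContinuousOn.div (by fun_prop) (by fun_prop) fun r hr => by
      have := (hsub hr).1; positivity
  have i1 : IntervalIntegrable (fun r => r ^ (m + 1) * (deriv f (G r) * (p r * η r) ^ 2)) volume a b :=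
    ContinuousOn.intervalIntegrable (by fun_prop)
  have i2 : IntervalIntegrable (fun r => r ^ (m + 1) * ((p' r * η r + p r * deriv η r) ^ 2 / √(1 + p r ^ 2) ^ 3)) volume a b := by
    simp only [← mul_one_div ((p' _ * η _ + p _ * deriv η _) ^ 2)]
    exact ContinuousOn.intervalIntegrable (by fun_prop)
  have i3 : IntervalIntegrable (fun r => (m + 1) * (r ^ (m + 1) * (p r / √(1 + p r ^ 2) * p r * (η r ^ 2 / r ^ 2)))) volume a b :=
    ContinuousOn.intervalIntegrable (by fun_prop)
  have i4 : IntervalIntegrable (fun r => r ^ (m + 1) * (1 / √(1 + p r ^ 2) ^ 3 * p r ^ 2 * deriv η r ^ 2)) volume a b :=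
    ContinuousOn.intervalIntegrable (by fun_prop)
  have e1 : ∫ r in a..b, ((r ^ (m + 1) * ((p' r * η r + p r * deriv η r) ^ 2 / √(1 + p r ^ 2) ^ 3)
      - r ^ (m + 1) * (deriv f (G r) * (p r * η r) ^ 2))
      + ((m + 1) * (r ^ (m + 1) * (p r / √(1 + p r ^ 2) * p r * (η r ^ 2 / r ^ 2)))
      - r ^ (m + 1) * (1 / √(1 + p r ^ 2) ^ 3 * p r ^ 2 * deriv η r ^ 2))) = 0 := by
    rw [intervalIntegral.integral_eq_sub_of_hasDerivAt
      (f := fun r => r ^ (m+1) * (-((m + 1) * (p r / √(1 + p r ^ 2)) / r) - f (G r)) * (p r * η r ^ 2))]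
    · simp [hz a (by simp), hz b (by simp)]
    · intro r hr
      have hr' := hsub hr
      have hr0 : 0 < r := hr'.1
      have hf' : HasDerivAt (fun r => f (G r)) (deriv f (G r) * p r) r :=
        ((H.hf.differentiable (by simp) (G r)).hasDerivAt).comp r (H.hG r hr')
      have hode := H.ode r hr'
      have h1 := ((hasDerivAt_pow (m+1) r).mul
        (((((hasDerivAt_q p _ r (H.hp r hr')).const_mul ((m:ℝ)+1)).div (hasDerivAt_id r) hr0.ne').neg).sub hf')).mul
        ((H.hp r hr').mul ((hη.differentiable (by simp) r).hasDerivAt.pow 2))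
      refine h1.congr_deriv (Eq.symm ?_)
      have hf0 : f (G r) = -(p' r / √(1 + p r ^ 2) ^ 3 + (m + 1) * (p r / √(1 + p r ^ 2)) / r) := by
        linarith
      simp only [Pi.mul_apply, Pi.sub_apply, Pi.neg_apply, Pi.div_apply, Pi.pow_apply, id, hf0]
      have h0 := sqrt_one_add_pos (p r)
      generalize √(1 + p r ^ 2) = s at *
      push_cast
      field_simp
      ring
    · exact (i2.sub i1).add (i3.sub i4)
  rw [intervalIntegral.integral_add (i2.sub i1) (i3.sub i4), intervalIntegral.integral_sub i2 i1,
    intervalIntegral.integral_sub i3 i4] at e1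
  linarith
end

lemma cutoff_exists : ∃ (ψ : ℝ → ℝ) (D : ℝ), ContDiff ℝ (⊤ : ℕ∞) ψ ∧
    (∀ r, r ∉ Set.Ioo (1/4 : ℝ) (5/4) → ψ r = 0) ∧
    (∀ r ∈ Set.Icc (1/2 : ℝ) 1, ψ r = 1) ∧ ∀ r, |deriv ψ r| ≤ D := by
  let ψ : ContDiffBump (3/4 : ℝ) := ⟨1/4, 1/2, by norm_num, by norm_num⟩
  have h1 : ContDiff ℝ (⊤ : ℕ∞) (ψ : ℝ → ℝ) := ψ.contDiff
  obtain ⟨D, hD⟩ := (ψ.hasCompactSupport.deriv).exists_bound_of_continuous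
    (h1.continuous_deriv (by simp))
  refine ⟨ψ, D, h1, ?_, ?_, hD⟩
  · intro r hr
    apply ψ.zero_of_le_dist
    show (1/2 : ℝ) ≤ dist r (3/4)
    rw [Real.dist_eq]
    by_contra hlt
    push Not at hlt
    rw [abs_lt] at hlt
    exact hr ⟨by linarith [hlt.1], by linarith [hlt.2]⟩
  · intro r hr
    apply ψ.one_of_mem_closedBall
    show dist r (3/4) ≤ (1/4 : ℝ)
    rw [Real.dist_eq, abs_le]
    exact ⟨by linarith [hr.1], by linarith [hr.2]⟩

lemma abs_le_w (t : ℝ) : |t| ≤ t / √(1 + t ^ 2) * t + 1 := by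
  have h0 := sqrt_one_add_pos t
  have hs : √(1 + t ^ 2) ^ 2 = 1 + t ^ 2 := Real.sq_sqrt (by positivity)
  have ht : |t| ^ 2 = t ^ 2 := sq_abs t
  have hle : √(1 + t ^ 2) ≤ 1 + |t| := by
    apply Real.sqrt_le_iff.2
    constructor
    · positivity
    · nlinarith [abs_nonneg t]
  have e : t / √(1 + t ^ 2) * t + 1 = (t ^ 2 + √(1 + t ^ 2)) / √(1 + t ^ 2) := by
    field_simp
  rw [e, le_div_iff₀ h0]
  have h1 : |t| ≤ √(1 + t ^ 2) := Real.abs_le_sqrt (by linarith)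
  nlinarith [abs_nonneg t]

lemma k_le (t : ℝ) : 1 / √(1 + t ^ 2) ^ 3 * t ^ 2 ≤ 1 := by
  have h0 := sqrt_one_add_pos t
  have hs : √(1 + t ^ 2) ^ 2 = 1 + t ^ 2 := Real.sq_sqrt (by positivity)
  have h1 : 1 ≤ √(1 + t ^ 2) := Real.one_le_sqrt.2 (by nlinarith [sq_nonneg t])
  rw [one_div, inv_mul_le_iff₀ (by positivity), mul_one]
  have e : √(1 + t ^ 2) ^ 3 = √(1 + t ^ 2) ^ 2 * √(1 + t ^ 2) := by ring
  rw [e, hs]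
  nlinarith [sq_nonneg t]

lemma Rad.annulus (H : Rad m f G p p') (ψ : ℝ → ℝ) (D : ℝ) (hψ : ContDiff ℝ (⊤ : ℕ∞) ψ)
    (hψ0 : ∀ r, r ∉ Set.Ioo (1/4 : ℝ) (5/4) → ψ r = 0)
    (hψ1 : ∀ r ∈ Set.Icc (1/2 : ℝ) 1, ψ r = 1) (hD : ∀ r, |deriv ψ r| ≤ D)
    (ρ : ℝ) (h0 : 0 < ρ) (h1 : ρ < 1) :
    ∫ r in (ρ/2)..ρ, r ^ (m + 1) * |p r| ≤ (2 ^ (m + 1) * D ^ 2 + 1) * ρ ^ (m + 2) := by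
  have hη : ContDiff ℝ (⊤ : ℕ∞) (fun r => ψ (ρ⁻¹ * r)) := hψ.comp (contDiff_const.mul contDiff_id)
  have hz : ∀ r, r ∉ Set.Ioo (ρ/4) (5*ρ/4) → ψ (ρ⁻¹ * r) = 0 := by
    intro r hr
    apply hψ0
    intro h
    apply hr
    obtain ⟨ha, hb⟩ := h
    rw [inv_mul_eq_div] at ha hb
    rw [lt_div_iff₀ h0] at ha
    rw [div_lt_iff₀ h0] at hb
    exact ⟨by linarith, by linarith⟩
  have hd : ∀ r, deriv (fun r => ψ (ρ⁻¹ * r)) r = ρ⁻¹ * deriv ψ (ρ⁻¹ * r) := fun r => by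
    rw [deriv_comp_mul_left, smul_eq_mul]
  have hm := H.main (fun r => ψ (ρ⁻¹ * r)) (ρ/4) (5*ρ/4) (by linarith) (by linarith) (by linarith)
    hη hz
  simp only [hd] at hm
  have hsub : Set.uIcc (ρ/4) (5*ρ/4) ⊆ Set.Ioo (0:ℝ) 2 := by
    rw [Set.uIcc_of_le (by linarith)]
    exact fun x hx => ⟨by linarith [hx.1], by linarith [hx.2]⟩
  have hsub2 : Set.uIcc (ρ/2) ρ ⊆ Set.uIcc (ρ/4) (5*ρ/4) := by
    rw [Set.uIcc_of_le (by linarith), Set.uIcc_of_le (by linarith)]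
    exact fun x hx => ⟨by linarith [hx.1], by linarith [hx.2]⟩
  have cp := H.cp.mono hsub
  have ck := H.ck.mono hsub
  have cq := H.cq.mono hsub
  have cη : Continuous (fun r => ψ (ρ⁻¹ * r)) := hη.continuous
  have cψ' : Continuous (deriv ψ) := hψ.continuous_deriv (by simp)
  have cη' : Continuous (fun r => deriv ψ (ρ⁻¹ * r)) := cψ'.comp (by fun_prop)
  set I : ℝ → ℝ := fun r => (m + 1) * (r ^ (m + 1) * (p r / √(1 + p r ^ 2) * p r *
    (ψ (ρ⁻¹ * r) ^ 2 / r ^ 2))) with hI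
  have cI : ContinuousOn I (Set.uIcc (ρ/4) (5*ρ/4)) := by
    have ci : ContinuousOn (fun r : ℝ => ψ (ρ⁻¹ * r) ^ 2 / r ^ 2) (Set.uIcc (ρ/4) (5*ρ/4)) :=
      ContinuousOn.div (cη.pow 2).continuousOn (by fun_prop) fun r hr => by
        have := (hsub hr).1; positivity
    exact continuousOn_const.mul ((continuousOn_pow _).mul ((cq.mul cp).mul ci))
  have up : ∫ r in (ρ/4)..(5*ρ/4), r ^ (m + 1) *
      (1 / √(1 + p r ^ 2) ^ 3 * p r ^ 2 * (ρ⁻¹ * deriv ψ (ρ⁻¹ * r)) ^ 2)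
      ≤ ∫ r in (ρ/4)..(5*ρ/4), (2*ρ) ^ (m + 1) * (ρ⁻¹ * D) ^ 2 := by
    apply intervalIntegral.integral_mono_on (by linarith)
    · exact ((continuousOn_pow _).mul ((ck.mul (cp.pow 2)).mul
        ((continuousOn_const.mul cη'.continuousOn).pow 2))).intervalIntegrable
    · exact intervalIntegrable_const
    · intro r hr
      have hr0 : 0 ≤ r := by linarith [hr.1]
      have hr1 : r ≤ 2 * ρ := by linarith [hr.2]
      have hk := k_le (p r)
      have hk0 : 0 ≤ 1 / √(1 + p r ^ 2) ^ 3 * p r ^ 2 := by positivity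
      have hsq : (ρ⁻¹ * deriv ψ (ρ⁻¹ * r)) ^ 2 ≤ (ρ⁻¹ * D) ^ 2 := by
        rw [mul_pow, mul_pow, ← sq_abs (deriv ψ _)]
        have := hD (ρ⁻¹ * r)
        gcongr
      calc _ ≤ (2*ρ) ^ (m + 1) * (1 * (ρ⁻¹ * D) ^ 2) := by gcongr
        _ = _ := by ring
  rw [intervalIntegral.integral_const] at up
  have Inn : ∀ r ∈ Set.Icc (ρ/4) (5*ρ/4), 0 ≤ I r := by
    intro r hr
    have hr0 : 0 ≤ r := by linarith [hr.1]
    have : 0 ≤ p r / √(1 + p r ^ 2) * p r := by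
      rw [div_mul_eq_mul_div]; exact div_nonneg (mul_self_nonneg _) (Real.sqrt_nonneg _)
    simp only [hI]
    positivity
  have low : ∫ r in (ρ/2)..ρ, I r ≤ ∫ r in (ρ/4)..(5*ρ/4), I r := by
    apply intervalIntegral.integral_mono_interval (by linarith) (by linarith) (by linarith)
    · refine (ae_restrict_iff' measurableSet_Ioc).2 (Eventually.of_forall fun r hr => ?_)
      exact Inn r (Set.Ioc_subset_Icc_self hr)
    · exact cI.intervalIntegrable
  have fin : ∫ r in (ρ/2)..ρ, r ^ (m + 1) * |p r| ≤ ∫ r in (ρ/2)..ρ, (ρ ^ 2 * I r + ρ ^ (m + 1)) := by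
    apply intervalIntegral.integral_mono_on (by linarith)
    · exact ((continuousOn_pow _).mul (cp.mono hsub2).abs).intervalIntegrable
    · exact ((continuousOn_const.mul (cI.mono hsub2)).add continuousOn_const).intervalIntegrable
    · intro r hr
      have hr0 : 0 < r := by linarith [hr.1]
      have hψr : ψ (ρ⁻¹ * r) = 1 := by
        apply hψ1
        rw [inv_mul_eq_div]
        exact ⟨by rw [le_div_iff₀ h0]; linarith [hr.1], by rw [div_le_iff₀ h0]; linarith [hr.2]⟩
      simp only [hI, hψr]
      have hw := abs_le_w (p r)
      have hw0 : 0 ≤ p r / √(1 + p r ^ 2) * p r := by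
        rw [div_mul_eq_mul_div]; exact div_nonneg (mul_self_nonneg _) (Real.sqrt_nonneg _)
      generalize p r / √(1 + p r ^ 2) * p r = w at *
      have hrr : 1 ≤ ρ ^ 2 / r ^ 2 := by
        rw [le_div_iff₀ (by positivity), one_mul]
        have := hr.2
        gcongr
      calc r ^ (m+1) * |p r| ≤ r ^ (m+1) * (w + 1) := by gcongr
        _ = 1 * (r ^ (m+1) * w * 1) + r ^ (m+1) := by ring
        _ ≤ (m + 1) * (r ^ (m+1) * w * (ρ ^ 2 / r ^ 2)) + ρ ^ (m+1) := by
          have := hr.2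
          have : (1:ℝ) ≤ m + 1 := by linarith [(Nat.cast_nonneg m : (0:ℝ) ≤ m)]
          gcongr
        _ = _ := by ring
  have iI : IntervalIntegrable (fun r => ρ ^ 2 * I r) volume (ρ/2) ρ :=
    (continuousOn_const.mul (cI.mono hsub2)).intervalIntegrable
  rw [intervalIntegral.integral_add iI
    intervalIntegrable_const, intervalIntegral.integral_const_mul, intervalIntegral.integral_const,
    smul_eq_mul] at fin
  rw [smul_eq_mul] at up
  have htot : ∫ r in (ρ/2)..ρ, I r ≤ (5*ρ/4 - ρ/4) * ((2*ρ) ^ (m + 1) * (ρ⁻¹ * D) ^ 2) :=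
    low.trans (hm.trans up)
  calc _ ≤ _ := fin
    _ ≤ ρ ^ 2 * ((5*ρ/4 - ρ/4) * ((2*ρ) ^ (m + 1) * (ρ⁻¹ * D) ^ 2)) + ρ * ρ ^ (m + 1) := by
      gcongr
      linarith
    _ = _ := by
      field_simp
      ring

lemma dyadic (m : ℕ) (F : ℝ → ℝ) (C M : ℝ) (hC : 0 ≤ C)
    (h : ∀ ρ, 0 < ρ → ρ < 1 → F ρ ≤ F (ρ/2) + C * ρ ^ (m + 2))
    (hM : ∀ ρ, 0 < ρ → ρ < 1 → F ρ ≤ M * ρ) (ρ : ℝ) (h0 : 0 < ρ) (h1 : ρ < 1) :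
    F ρ ≤ 2 * C * ρ ^ (m + 2) := by
  have step : ∀ k : ℕ, F ρ - 2 * C * ρ ^ (m+2) ≤ F (ρ/2^k) - 2 * C * (ρ/2^k) ^ (m+2) := by
    intro k
    induction k with
    | zero => simp
    | succ k ih =>
      refine ih.trans ?_
      have hp : 0 < ρ / 2 ^ k := by positivity
      have hp1 : ρ / 2 ^ k < 1 := lt_of_le_of_lt (div_le_self h0.le (one_le_pow₀ (by norm_num))) h1
      have := h _ hp hp1
      have e : ρ / 2 ^ (k+1) = ρ / 2 ^ k / 2 := by rw [pow_succ]; field_simp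
      rw [e]
      generalize ρ / 2 ^ k = s at *
      have e2 : (s / 2) ^ (m + 2) ≤ s ^ (m+2) / 2 := by
        rw [div_pow]
        gcongr
        calc (2:ℝ) = 2 ^ 1 := by norm_num
          _ ≤ 2 ^ (m + 2) := by gcongr <;> simp
      nlinarith
  have lim : Tendsto (fun k : ℕ => M * (ρ / 2 ^ k)) atTop (𝓝 0) := by
    have := (tendsto_pow_atTop_nhds_zero_of_lt_one (r := (1/2:ℝ)) (by norm_num) (by norm_num)).const_mul (M * ρ)
    rw [mul_zero] at this
    refine this.congr fun k => ?_
    rw [div_pow, one_pow]; ring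
  have : F ρ - 2 * C * ρ ^ (m+2) ≤ 0 := by
    refine ge_of_tendsto' lim fun k => (step k).trans ?_
    have hp : 0 < ρ / 2 ^ k := by positivity
    have hp1 : ρ / 2 ^ k < 1 := lt_of_le_of_lt (div_le_self h0.le (one_le_pow₀ (by norm_num))) h1
    have h3 := hM _ hp hp1
    have : 0 ≤ 2 * C * (ρ/2^k) ^ (m+2) := by positivity
    linarith
  linarith
end

lemma hasGradientAt_radial {n : ℕ} (h : ℝ → ℝ) (h' : ℝ) (x : Euc n) (hx : x ≠ 0)
    (hh : HasDerivAt h h' ‖x‖) :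
    HasGradientAt (fun y : Euc n => h ‖y‖) ((h' / ‖x‖) • x) x := by
  rw [hasGradientAt_iff_hasFDerivAt]
  have hx0 : 0 < ‖x‖ := norm_pos_iff.2 hx
  have h1 : HasFDerivAt (fun y : Euc n => ‖y‖ ^ 2) (2 • innerSL ℝ x) x :=
    (hasStrictFDerivAt_norm_sq x).hasFDerivAt
  have h2 : HasDerivAt Real.sqrt (1 / (2 * √(‖x‖ ^ 2))) (‖x‖ ^ 2) :=
    Real.hasDerivAt_sqrt (by positivity)
  have h3 := h2.comp_hasFDerivAt x h1
  have h4 : HasFDerivAt (fun y : Euc n => ‖y‖) ((1 / (2 * √(‖x‖ ^ 2))) • (2 • innerSL ℝ x)) x := by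
    refine h3.congr_of_eventuallyEq (Eventually.of_forall fun y => ?_)
    simp [Real.sqrt_sq]
  refine (hh.comp_hasFDerivAt x h4).congr_fderiv ?_
  ext y
  simp [Real.sqrt_sq hx0.le, inner_smul_left]
  field_simp

lemma deriv_zero_outside (h : ℝ → ℝ) (a b : ℝ) (hab : a < b) (hh : ContDiff ℝ (⊤ : ℕ∞) h)
    (hz : ∀ r, r ∉ Set.Ioo a b → h r = 0) : ∀ r, r ∉ Set.Ioo a b → deriv h r = 0 := by
  have hc : IsClosed {r | deriv h r = 0} :=
    isClosed_eq (hh.continuous_deriv (by simp)) continuous_const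
  have h1 : (Set.Icc a b)ᶜ ⊆ {r | deriv h r = 0} := by
    intro r hr
    have : h =ᶠ[𝓝 r] fun _ => 0 := by
      filter_upwards [isClosed_Icc.isOpen_compl.mem_nhds hr] with s hs
      exact hz s fun h' => hs (Set.Ioo_subset_Icc_self h')
    simp [this.deriv_eq]
  intro r hr
  have h2 := closure_minimal h1 hc
  rw [closure_compl, interior_Icc] at h2
  exact h2 hr

lemma isTestFun_radial {n : ℕ} (h : ℝ → ℝ) (a b : ℝ) (ha : 0 < a) (hb : b < 2)
    (hh : ContDiff ℝ (⊤ : ℕ∞) h) (hz : ∀ r, r ∉ Set.Ioo a b → h r = 0) :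
    IsTestFun (ball (0 : Euc n) 2) (fun x => h ‖x‖) := by
  have hs : tsupport (fun x : Euc n => h ‖x‖) ⊆ closedBall 0 b := by
    apply closure_minimal _ isClosed_closedBall
    intro x hx
    rw [mem_closedBall_zero_iff]
    by_contra hlt
    exact hx (hz _ fun h' => hlt h'.2.le)
  refine ⟨?_, ?_, hs.trans (closedBall_subset_ball hb)⟩
  · rw [contDiff_iff_contDiffAt]
    intro x
    by_cases hx : x = 0
    · subst hx
      have : (fun x : Euc n => h ‖x‖) =ᶠ[𝓝 0] fun _ => 0 := by
        filter_upwards [ball_mem_nhds (0 : Euc n) ha] with y hy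
        rw [mem_ball_zero_iff] at hy
        exact hz _ fun h' => by linarith [h'.1]
      exact contDiffAt_const.congr_of_eventuallyEq this
    · exact hh.contDiffAt.comp x (contDiffAt_norm ℝ hx)
  · exact (isCompact_closedBall (0 : Euc n) b).of_isClosed_subset (isClosed_tsupport _) hs

lemma radial_int (m : ℕ) (a b R : ℝ) (ha : 0 ≤ a) (hbR : b ≤ R)
    (F : Euc (m+2) → ℝ) (Fr : ℝ → ℝ)
    (h : ∀ x ∈ ball (0 : Euc (m+2)) R, x ≠ 0 → F x = Fr ‖x‖)
    (hz : ∀ r, r ∉ Set.Ioo a b → Fr r = 0) :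
    ∫ x in ball (0 : Euc (m+2)) R, F x =
      ((m + 2 : ℕ) * (volume : Measure (Euc (m+2))).real (ball 0 1)) *
        ∫ r in a..b, r ^ (m + 1) * Fr r := by
  have e1 : ∫ x in ball (0 : Euc (m+2)) R, F x = ∫ x in ball (0 : Euc (m+2)) R, Fr ‖x‖ := by
    apply setIntegral_congr_ae measurableSet_ball
    have : ∀ᵐ x ∂(volume : Measure (Euc (m+2))), x ≠ 0 := by
      simp [ae_iff]
    filter_upwards [this] with x hx hxb
    exact h x hxb hx
  rw [e1, setIntegral_eq_integral_of_forall_compl_eq_zero]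
  swap
  · intro x hx
    apply hz
    intro h'
    apply hx
    rw [mem_ball_zero_iff]
    exact h'.2.trans_le hbR
  rw [integral_fun_norm_addHaar volume Fr, setIntegral_eq_integral_of_forall_compl_eq_zero,
    intervalIntegral.integral_eq_integral_of_support_subset]
  · simp [mul_assoc]
  · intro r hr
    by_contra hr'
    apply hr
    simp [hz r fun h' => hr' (Set.Ioo_subset_Ioc_self h')]
  · intro r hr
    rw [hz r fun h' => hr (ha.trans_lt h'.1), smul_zero]

lemma const_pos (m : ℕ) :
    0 < ((m + 2 : ℕ) * (volume : Measure (Euc (m+2))).real (ball 0 1) : ℝ) := by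
  have : 0 < (volume : Measure (Euc (m+2))).real (ball 0 1) :=
    ENNReal.toReal_pos (measure_ball_pos _ _ one_pos).ne' measure_ball_lt_top.ne
  positivity

lemma exists_profile (m : ℕ) (f : ℝ → ℝ) (u : Euc (m+2) → ℝ) (g : ℝ → ℝ)
    (hf : ContDiff ℝ 1 f) (hu : ContDiffOn ℝ 3 u (ball (0 : Euc (m+2)) 2))
    (hst : IsStableSolution (ball (0 : Euc (m+2)) 2) f u) (hg : ∀ x, u x = g ‖x‖) :
    ∃ G p p' : ℝ → ℝ, Rad m f G p p' ∧ ContinuousOn p (Set.Ioo (-2) 2) ∧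
      ∀ x ∈ ball (0 : Euc (m+2)) 2, x ≠ 0 → ‖gradient u x‖ = |p ‖x‖| := by
  let e : Euc (m+2) := EuclideanSpace.single 0 1
  have he : ‖e‖ = 1 := by simp [e]
  let G : ℝ → ℝ := fun r => u (r • e)
  have hGu : u = fun x => G ‖x‖ := by
    funext x
    simp only [G, hg, norm_smul, he, mul_one, norm_norm]
  have hO : IsOpen (Set.Ioo (-2:ℝ) 2) := isOpen_Ioo
  have hG : ContDiffOn ℝ 3 G (Set.Ioo (-2) 2) := by
    apply hu.comp (t := ball (0 : Euc (m+2)) 2) (by fun_prop)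
    intro r hr
    rw [mem_ball_zero_iff, norm_smul, he, mul_one, Real.norm_eq_abs, abs_lt]
    exact hr
  have hp : ContDiffOn ℝ 2 (deriv G) (Set.Ioo (-2) 2) :=
    hG.deriv_of_isOpen hO (by norm_num)
  have hp' : ContDiffOn ℝ 1 (deriv (deriv G)) (Set.Ioo (-2) 2) :=
    hp.deriv_of_isOpen hO (by norm_num)
  have hsub : Set.Ioo (0:ℝ) 2 ⊆ Set.Ioo (-2) 2 := Set.Ioo_subset_Ioo_left (by norm_num)
  have dG : ∀ r ∈ Set.Ioo (0:ℝ) 2, HasDerivAt G (deriv G r) r := fun r hr =>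
    ((hG.differentiableOn (by norm_num)).differentiableAt (hO.mem_nhds (hsub hr))).hasDerivAt
  have dp : ∀ r ∈ Set.Ioo (0:ℝ) 2, HasDerivAt (deriv G) (deriv (deriv G) r) r := fun r hr =>
    ((hp.differentiableOn (by norm_num)).differentiableAt (hO.mem_nhds (hsub hr))).hasDerivAt
  have gu : ∀ x ∈ ball (0 : Euc (m+2)) 2, x ≠ 0 → gradient u x = (deriv G ‖x‖ / ‖x‖) • x := by
    intro x hx hx0
    rw [mem_ball_zero_iff] at hx
    have := (hasGradientAt_radial G _ x hx0 (dG _ ⟨norm_pos_iff.2 hx0, hx⟩)).gradient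
    rw [← hGu] at this
    exact this
  have gh : ∀ h : ℝ → ℝ, ContDiff ℝ (⊤ : ℕ∞) h → ∀ x : Euc (m+2), x ≠ 0 →
      gradient (fun x : Euc (m+2) => h ‖x‖) x = (deriv h ‖x‖ / ‖x‖) • x := by
    intro h hh x hx0
    exact (hasGradientAt_radial h _ x hx0 (hh.differentiable (by simp) _).hasDerivAt).gradient
  have nrm : ∀ (c : ℝ) (x : Euc (m+2)), x ≠ 0 → ‖(c / ‖x‖) • x‖ = |c| := by
    intro c x hx
    rw [norm_smul, norm_div, norm_norm, div_mul_cancel₀ _ (norm_ne_zero_iff.2 hx),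
      Real.norm_eq_abs]
  have inn : ∀ (c d : ℝ) (x : Euc (m+2)), x ≠ 0 → ⟪(c / ‖x‖) • x, (d / ‖x‖) • x⟫ = c * d := by
    intro c d x hx
    rw [inner_smul_left, inner_smul_right, real_inner_self_eq_norm_sq]
    have := norm_ne_zero_iff.2 hx
    simp
    field_simp
  have hGx : ∀ x, u x = G ‖x‖ := fun x => congrFun hGu x
  refine ⟨G, deriv G, deriv (deriv G), ⟨hf, dG, dp, hp'.continuousOn.mono hsub, ?_, ?_⟩,
    hp.continuousOn, ?_⟩
  · intro h a b ha hab hb hh hz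
    have hz' := deriv_zero_outside h a b hab hh hz
    have hw := hst.1.2.2.2 _ (isTestFun_radial h a b ha hb hh hz)
    rw [radial_int m a b 2 ha.le hb.le _
        (fun r => deriv G r * deriv h r / √(1 + deriv G r ^ 2)) ?_ ?_,
      radial_int m a b 2 ha.le hb.le _ (fun r => f (G r) * h r) ?_ ?_] at hw
    · exact mul_left_cancel₀ (const_pos m).ne' hw
    · intro x _ _
      rw [hGx]
    · intro r hr
      simp [hz r hr]
    · intro x hx hx0
      rw [gu x hx hx0, gh h hh x hx0, inn _ _ _ hx0, nrm _ _ hx0, sq_abs]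
    · intro r hr
      simp [hz' r hr]
  · intro h a b ha hab hb hh hz
    have hz' := deriv_zero_outside h a b hab hh hz
    have hw := hst.2.2 _ (isTestFun_radial h a b ha hb hh hz)
    rw [radial_int m a b 2 ha.le hb.le _
        (fun r => deriv f (G r) * h r ^ 2) ?_ ?_,
      radial_int m a b 2 ha.le hb.le _ (fun r => deriv h r ^ 2 / √(1 + deriv G r ^ 2) ^ 3) ?_ ?_] at hw
    · exact le_of_mul_le_mul_left hw (const_pos m)
    · intro x hx hx0
      rw [gu x hx hx0, gh h hh x hx0, inn _ _ _ hx0, nrm _ _ hx0, nrm _ _ hx0, sq_abs, sq_abs]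
      have h0 := sqrt_one_add_pos (deriv G ‖x‖)
      have hs : √(1 + deriv G ‖x‖ ^ 2) ^ 2 = 1 + deriv G ‖x‖ ^ 2 := Real.sq_sqrt (by positivity)
      have hr : (1 + deriv G ‖x‖ ^ 2) ^ ((3:ℝ)/2) = √(1 + deriv G ‖x‖ ^ 2) ^ 3 := by
        have key : ∀ y : ℝ, 0 ≤ y → y ^ ((3:ℝ)/2) = √y ^ 3 := by
          intro y hy
          rw [Real.sqrt_eq_rpow, ← Real.rpow_natCast, ← Real.rpow_mul hy]
          norm_num
        exact key _ (by positivity)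
      rw [hr]
      generalize √(1 + deriv G ‖x‖ ^ 2) = s at *
      field_simp
      rw [hs]; ring
    · intro r hr
      simp [hz' r hr]
    · intro x _ _
      rw [hGx]
    · intro r hr
      simp [hz r hr]
  · intro x hx hx0
    rw [gu x hx hx0, nrm _ _ hx0]

/-- **Proposition (Decay estimate for radial stable solutions).**
Let `n ≥ 2`, `f ∈ C¹(ℝ)`, and let `u ∈ W^{3,1}_loc(B₂)` be a stable solution of
`div(∇u/√(1+|∇u|²)) = -f(u)` in `B₂ ⊂ ℝⁿ`, radially symmetric with respect to the origin.
Then for every `α ∈ (0,1)` there is `K = K(n,α) > 0` with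
`∫_{B_ρ(0)} |∇u| ≤ K ρ^{n-1+α}` for all `0 < ρ < 1`. -/
theorem stmt_2 (n : ℕ) (hn : 2 ≤ n) (α : ℝ) (hα : α ∈ Set.Ioo (0:ℝ) 1) :
    ∃ K > (0:ℝ), ∀ (f : ℝ → ℝ) (u : Euc n → ℝ) (g : ℝ → ℝ),
      ContDiff ℝ 1 f →
      ContDiffOn ℝ 3 u (ball (0 : Euc n) 2) →
      IsStableSolution (ball (0 : Euc n) 2) f u →
      (∀ x : Euc n, u x = g ‖x‖) →
      ∀ ρ : ℝ, 0 < ρ → ρ < 1 →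
        ∫ x in ball (0 : Euc n) ρ, ‖gradient u x‖ ≤ K * ρ ^ ((n : ℝ) - 1 + α) := by
  obtain ⟨m, rfl⟩ : ∃ m, n = m + 2 := ⟨n - 2, by omega⟩
  obtain ⟨ψ, D, hψ, hψ0, hψ1, hD⟩ := cutoff_exists
  have hc := const_pos m
  set c : ℝ := ((m + 2 : ℕ) * (volume : Measure (Euc (m+2))).real (ball 0 1) : ℝ) with hcdef
  refine ⟨c * (2 * (2 ^ (m + 1) * D ^ 2 + 1)), by positivity, ?_⟩
  intro f u g hf hu hst hg ρ h0 h1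
  obtain ⟨G, p, p', H, cp, hgrad⟩ := exists_profile m f u g hf hu hst hg
  have cpI : ContinuousOn p (Set.Icc 0 1) :=
    cp.mono fun x hx => ⟨by linarith [hx.1], by linarith [hx.2]⟩
  obtain ⟨M, hM⟩ := isCompact_Icc.exists_bound_of_continuousOn cpI
  have hpint : ∀ a b : ℝ, a ∈ Set.Icc (0:ℝ) 1 → b ∈ Set.Icc (0:ℝ) 1 →
      IntervalIntegrable (fun r => r ^ (m + 1) * |p r|) volume a b := by
    intro a b ha hb
    apply ContinuousOn.intervalIntegrable
    exact ((continuousOn_pow _).mul cpI.abs).mono (Set.ordConnected_Icc.uIcc_subset ha hb)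
  have hdy := dyadic m (fun ρ => ∫ r in (0:ℝ)..ρ, r ^ (m + 1) * |p r|) (2 ^ (m + 1) * D ^ 2 + 1) M
    (by positivity) ?_ ?_ ρ h0 h1
  rotate_left
  · intro s hs0 hs1
    have := H.annulus ψ D hψ hψ0 hψ1 hD s hs0 hs1
    rw [← intervalIntegral.integral_add_adjacent_intervals
      (hpint 0 (s/2) (by simp) ⟨by linarith, by linarith⟩)
      (hpint (s/2) s ⟨by linarith, by linarith⟩ ⟨by linarith, by linarith⟩)]
    linarith
  · intro s hs0 hs1
    calc ∫ r in (0:ℝ)..s, r ^ (m + 1) * |p r| ≤ ∫ r in (0:ℝ)..s, M := by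
          apply intervalIntegral.integral_mono_on hs0.le
            (hpint 0 s (by simp) ⟨hs0.le, hs1.le⟩) intervalIntegrable_const
          intro r hr
          have h2 : |p r| ≤ M := hM r ⟨hr.1, by linarith [hr.2]⟩
          have h3 : r ^ (m + 1) ≤ 1 := pow_le_one₀ hr.1 (by linarith [hr.2])
          have h4 := abs_nonneg (p r)
          nlinarith
      _ = M * s := by simp [mul_comm]
  have e1 : ∫ x in ball (0 : Euc (m+2)) ρ, ‖gradient u x‖ =
      c * ∫ r in (0:ℝ)..ρ, r ^ (m + 1) * |p r| := by
    rw [radial_int m 0 ρ ρ le_rfl le_rfl _ ((Set.Ioo 0 ρ).indicator fun r => |p r|)]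
    · congr 1
      rw [intervalIntegral.integral_of_le h0.le, intervalIntegral.integral_of_le h0.le,
        integral_Ioc_eq_integral_Ioo, integral_Ioc_eq_integral_Ioo]
      apply setIntegral_congr_fun measurableSet_Ioo
      intro r hr
      simp only [Set.indicator_of_mem hr]
    · intro x hx hx0
      have hx2 : x ∈ ball (0 : Euc (m+2)) 2 := ball_subset_ball (by linarith) hx
      rw [hgrad x hx2 hx0, Set.indicator_of_mem]
      exact ⟨norm_pos_iff.2 hx0, mem_ball_zero_iff.1 hx⟩
    · intro r hr
      exact Set.indicator_of_notMem hr _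
  rw [e1]
  have hpow : ρ ^ (m + 2) ≤ ρ ^ (((m + 2 : ℕ) : ℝ) - 1 + α) := by
    rw [← Real.rpow_natCast]
    apply Real.rpow_le_rpow_of_exponent_ge h0 h1.le
    linarith [hα.2]
  calc c * ∫ r in (0:ℝ)..ρ, r ^ (m + 1) * |p r|
      ≤ c * (2 * (2 ^ (m + 1) * D ^ 2 + 1) * ρ ^ (m + 2)) := by gcongr
    _ ≤ c * (2 * (2 ^ (m + 1) * D ^ 2 + 1) * ρ ^ (((m + 2 : ℕ) : ℝ) - 1 + α)) := by gcongr
    _ = _ := by ring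
end

section
/- Let n ≥ 2, f ∈ C¹(ℝ), and let u be a W^{3,1}_loc(ℝⁿ) stable solution of div(∇u/√(1+|∇u|²)) = −f(u) in ℝⁿ. Define q_n := −1 if 2 ≤ n ≤ 10, and q_n := −n/2 + √(n−1) + 1 if n ≥ 11. If u is nonconstant, then there exist c > 0 and R₀ > 2 such that the average ⨍_{B_{2R}∖B_R} |∇u|² dx ≥ c R^{2q_n} for all R ≥ R₀. -/
open MeasureTheory Metric Real Filter Asymptotics Bornology
open scoped RealInnerProductSpace Topology

noncomputable section

theorem radial_ibp {n : ℕ} (x₀ : Euc n) (g : Euc n → ℝ) (hg : ContDiff ℝ 1 g)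
    (hc : HasCompactSupport g) :
    ∫ x, fderiv ℝ g x (x - x₀) = -(n : ℝ) * ∫ x, g x := by
  have hgd : Continuous (fderiv ℝ g) := hg.continuous_fderiv one_ne_zero
  have hcd : HasCompactSupport (fderiv ℝ g) := hc.fderiv ℝ
  have key : ∀ i : Fin n, Integrable (fun x : Euc n => (x i - x₀ i) *
      fderiv ℝ g x (EuclideanSpace.single i 1)) ∧
      ∫ x : Euc n, (x i - x₀ i) * fderiv ℝ g x (EuclideanSpace.single i 1) = - ∫ x, g x := by
    intro i
    have hd : ∀ x : Euc n, HasFDerivAt (fun x : Euc n => x i - x₀ i)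
        (EuclideanSpace.proj i : Euc n →L[ℝ] ℝ) x := by
      intro x
      exact ((EuclideanSpace.proj i : Euc n →L[ℝ] ℝ).hasFDerivAt).sub_const _
    have hco : Continuous (fun x : Euc n => x i - x₀ i) := by fun_prop
    have h2 : Integrable (fun x : Euc n => (x i - x₀ i) *
      fderiv ℝ g x (EuclideanSpace.single i 1)) := by
      apply Continuous.integrable_of_hasCompactSupport
      · exact hco.mul (hgd.clm_apply continuous_const)
      · apply HasCompactSupport.mul_left
        exact hcd.comp_left (g := fun T : Euc n →L[ℝ] ℝ => T (EuclideanSpace.single i 1)) (by simp)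
    refine ⟨h2, ?_⟩
    rw [integral_mul_fderiv_eq_neg_fderiv_mul_of_integrable]
    · congr 1
      refine integral_congr_ae (Eventually.of_forall fun x => ?_)
      simp only [(hd x).fderiv]
      simp
    · have : (fun x : Euc n => fderiv ℝ (fun x : Euc n => x i - x₀ i) x (EuclideanSpace.single i 1) * g x) = g := by
        funext x
        rw [(hd x).fderiv]; simp
      rw [this]
      exact hg.continuous.integrable_of_hasCompactSupport hc
    · exact h2
    · exact (hco.mul hg.continuous).integrable_of_hasCompactSupport hc.mul_left
    · exact fun x _ => (hd x).differentiableAt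
    · exact fun x _ => (hg.differentiable one_ne_zero) x
  have : ∀ x : Euc n, fderiv ℝ g x (x - x₀) =
      ∑ i, (x i - x₀ i) * fderiv ℝ g x (EuclideanSpace.single i 1) := by
    intro x
    conv_lhs => rw [← (EuclideanSpace.basisFun (Fin n) ℝ).sum_repr (x - x₀)]
    simp [map_sum]
  simp_rw [this]
  rw [integral_finsetSum _ (fun i _ => (key i).1)]
  simp [fun i => (key i).2]

theorem cont_gradient {n : ℕ} {g : Euc n → ℝ} (hg : ContDiff ℝ 1 g) : Continuous (gradient g) := by
  unfold gradient
  exact (LinearIsometryEquiv.continuous _).comp (hg.continuous_fderiv one_ne_zero)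

theorem approx_C1 {n : ℕ} (ψ : Euc n → ℝ) (h : ContDiff ℝ 1 ψ) (hc : HasCompactSupport ψ) :
    ∃ (φ : ℕ → Euc n → ℝ) (K : Set (Euc n)) (C : ℝ), IsCompact K ∧
      (∀ k, IsTestFun Set.univ (φ k)) ∧
      (∀ k x, x ∉ K → φ k x = 0 ∧ gradient (φ k) x = 0) ∧
      (∀ k x, |φ k x| ≤ C ∧ ‖gradient (φ k) x‖ ≤ C) ∧
      ∀ x, Tendsto (fun k => φ k x) atTop (𝓝 (ψ x)) ∧
        Tendsto (fun k => gradient (φ k) x) atTop (𝓝 (gradient ψ x)) := by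
  let b : ℕ → ContDiffBump (0 : Euc n) := fun k =>
    ⟨1 / (2 * ((k : ℝ) + 1)), 1 / ((k : ℝ) + 1), by positivity, by
      apply one_div_lt_one_div_of_lt <;> linarith [(Nat.cast_nonneg k : (0:ℝ) ≤ k)]⟩
  have hb0 : Tendsto (fun k => (b k).rOut) atTop (𝓝 0) := tendsto_one_div_add_atTop_nhds_zero_nat
  have hb1 : ∀ k, (b k).rOut ≤ 1 := by
    intro k
    change 1 / ((k : ℝ) + 1) ≤ 1
    rw [div_le_one (by positivity)]
    linarith [(Nat.cast_nonneg k : (0:ℝ) ≤ k)]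
  have hgd : Continuous (fderiv ℝ ψ) := h.continuous_fderiv one_ne_zero
  have hcd : HasCompactSupport (fderiv ℝ ψ) := hc.fderiv ℝ
  let φ : ℕ → Euc n → ℝ := fun k => convolution ((b k).normed volume) ψ (ContinuousLinearMap.lsmul ℝ ℝ) volume
  let dφ : ℕ → Euc n → (Euc n →L[ℝ] ℝ) := fun k =>
    convolution ((b k).normed volume) (fderiv ℝ ψ) (ContinuousLinearMap.lsmul ℝ ℝ) volume
  have hloc : ∀ k, LocallyIntegrable ((b k).normed (volume : Measure (Euc n))) :=
    fun k => (b k).continuous_normed.locallyIntegrable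
  have hfd : ∀ k x, HasFDerivAt (φ k) (dφ k x) x := fun k x =>
    hc.hasFDerivAt_convolution_right (ContinuousLinearMap.lsmul ℝ ℝ) (hloc k) h x
  have hgr : ∀ k x, gradient (φ k) x = (InnerProductSpace.toDual ℝ (Euc n)).symm (dφ k x) := by
    intro k x
    unfold gradient
    rw [(hfd k x).fderiv]
  obtain ⟨C1, hC1⟩ := h.continuous.bounded_above_of_compact_support hc
  obtain ⟨C2, hC2⟩ := hgd.bounded_above_of_compact_support hcd
  let K := cthickening 1 (tsupport ψ)
  have hK : ∀ x, x ∉ K → ∀ y ∈ ball x 1, ψ y = 0 ∧ fderiv ℝ ψ y = 0 := by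
    intro x hx y hy
    have : y ∉ tsupport ψ := by
      intro hy'
      apply hx
      exact mem_cthickening_of_dist_le x y 1 _ hy' (by rw [dist_comm]; exact (mem_ball.1 hy).le)
    refine ⟨image_eq_zero_of_notMem_tsupport this, ?_⟩
    by_contra h'
    exact this (support_fderiv_subset ℝ h')
  have hsub : ∀ (k : ℕ) (x : Euc n), ball x (b k).rOut ⊆ ball x 1 := fun k x => ball_subset_ball (hb1 k)
  refine ⟨φ, K, max (C1 + 2 * C1) (C2 + 2 * C2), IsCompact.cthickening hc, ?_, ?_, ?_, ?_⟩
  · intro k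
    refine ⟨?_, ?_, Set.subset_univ _⟩
    · exact (b k).hasCompactSupport_normed.contDiff_convolution_left _ (b k).contDiff_normed
        h.continuous.locallyIntegrable
    · exact (b k).hasCompactSupport_normed.convolution _ hc
  · intro k x hx
    have h0 := hK x hx x (mem_ball_self one_pos)
    have e1 : dist (φ k x) (ψ x) ≤ 0 := (b k).dist_normed_convolution_le
      h.continuous.aestronglyMeasurable (fun y hy => by
        rw [(hK x hx y (hsub k x hy)).1, h0.1]; simp)
    have e2 : dist (dφ k x) (fderiv ℝ ψ x) ≤ 0 := (b k).dist_normed_convolution_le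
      hgd.aestronglyMeasurable (fun y hy => by
        rw [(hK x hx y (hsub k x hy)).2, h0.2]; simp)
    rw [dist_le_zero] at e1 e2
    rw [hgr, e1, e2, h0.1, h0.2]
    simp
  · intro k x
    have e1 : dist (φ k x) (ψ x) ≤ 2 * C1 := (b k).dist_normed_convolution_le
      h.continuous.aestronglyMeasurable (fun y hy => by
        have := dist_le_norm_add_norm (ψ y) (ψ x)
        linarith [hC1 x, hC1 y])
    have e2 : dist (dφ k x) (fderiv ℝ ψ x) ≤ 2 * C2 := (b k).dist_normed_convolution_le
      hgd.aestronglyMeasurable (fun y hy => by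
        have := dist_le_norm_add_norm (fderiv ℝ ψ y) (fderiv ℝ ψ x)
        linarith [hC2 x, hC2 y])
    rw [dist_eq_norm] at e1 e2
    constructor
    · apply le_max_of_le_left
      have := norm_le_norm_add_norm_sub' (φ k x) (ψ x)
      have h3 := hC1 x
      rw [← Real.norm_eq_abs]
      linarith
    · apply le_max_of_le_right
      rw [hgr, LinearIsometryEquiv.norm_map]
      have := norm_le_norm_add_norm_sub' (dφ k x) (fderiv ℝ ψ x)
      have h3 := hC2 x
      linarith
  · intro x
    refine ⟨ContDiffBump.convolution_tendsto_right_of_continuous hb0 h.continuous x, ?_⟩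
    simp_rw [hgr]
    exact ((LinearIsometryEquiv.continuous _).tendsto _).comp
      (ContDiffBump.convolution_tendsto_right_of_continuous hb0 hgd x)

theorem approx_integral {n : ℕ} (ψ : Euc n → ℝ) (h : ContDiff ℝ 1 ψ) (hc : HasCompactSupport ψ) :
    ∃ φ : ℕ → Euc n → ℝ, (∀ k, IsTestFun Set.univ (φ k)) ∧
      ∀ B : Euc n → ℝ → Euc n → ℝ, Continuous (fun p : Euc n × ℝ × Euc n => B p.1 p.2.1 p.2.2) →
        (∀ x, B x 0 0 = 0) →
        Tendsto (fun k => ∫ x, B x (φ k x) (gradient (φ k) x)) atTop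
          (𝓝 (∫ x, B x (ψ x) (gradient ψ x))) := by
  obtain ⟨φ, K, C, hK, hφ, h0, hC, hlim⟩ := approx_C1 ψ h hc
  refine ⟨φ, hφ, fun B hB hB0 => ?_⟩
  obtain ⟨M, hM⟩ := (hK.prod ((isCompact_Icc (a := -C) (b := C)).prod
    (isCompact_closedBall (0 : Euc n) C))).exists_bound_of_continuousOn hB.continuousOn
  refine tendsto_integral_of_dominated_convergence (K.indicator fun _ => M) ?_ ?_ ?_ ?_
  · intro k
    have h1 : ContDiff ℝ 1 (φ k) := (hφ k).1.of_le (by exact_mod_cast le_top)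
    have := hB.comp (continuous_id.prodMk (h1.continuous.prodMk (cont_gradient h1)))
    exact this.aestronglyMeasurable
  · rw [integrable_indicator_iff hK.measurableSet]
    exact integrableOn_const hK.measure_lt_top.ne
  · intro k
    refine Eventually.of_forall fun x => ?_
    by_cases hx : x ∈ K
    · rw [Set.indicator_of_mem hx]
      refine hM (x, φ k x, gradient (φ k) x) ⟨hx, ?_, ?_⟩
      · exact abs_le.1 (hC k x).1
      · simpa using (hC k x).2
    · rw [Set.indicator_of_notMem hx, (h0 k x hx).1, (h0 k x hx).2, hB0]
      simp
  · refine Eventually.of_forall fun x => ?_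
    exact (hB.tendsto (x, ψ x, gradient ψ x)).comp
      (tendsto_const_nhds.prodMk_nhds ((hlim x).1.prodMk_nhds (hlim x).2))

/-- The area element `√(1+|∇u|²)`. -/
def WW {n : ℕ} (u : Euc n → ℝ) (x : Euc n) : ℝ := Real.sqrt (1 + ‖gradient u x‖ ^ 2)

theorem WW_pos {n : ℕ} (u : Euc n → ℝ) (x : Euc n) : 0 < WW u x := by unfold WW; positivity

theorem WW_sq {n : ℕ} (u : Euc n → ℝ) (x : Euc n) : WW u x ^ 2 = 1 + ‖gradient u x‖ ^ 2 := by
  unfold WW; rw [Real.sq_sqrt]; positivity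

theorem WW_rpow {n : ℕ} (u : Euc n → ℝ) (x : Euc n) :
    (1 + ‖gradient u x‖ ^ 2) ^ ((3:ℝ)/2) = WW u x ^ 3 := by
  rw [← WW_sq, ← Real.rpow_natCast, ← Real.rpow_mul (WW_pos u x).le, ← Real.rpow_natCast]
  norm_num

theorem contDiff_gradient {n : ℕ} {u : Euc n → ℝ} {m k : ℕ} (hk : m + 1 ≤ k) (hu : ContDiff ℝ k u) :
    ContDiff ℝ m (gradient u) := by
  unfold gradient
  exact (LinearIsometryEquiv.contDiff _).comp (hu.fderiv_right (by exact_mod_cast hk))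

theorem contDiff_WW {n : ℕ} {u : Euc n → ℝ} {m : ℕ} (hg : ContDiff ℝ m (gradient u)) :
    ContDiff ℝ m (WW u) := by
  unfold WW
  refine ContDiff.sqrt (contDiff_const.add (hg.norm_sq ℝ)) (fun x => by positivity)

theorem hess_symm {n : ℕ} {u : Euc n → ℝ} (hu : ContDiff ℝ 2 u) (x v w : Euc n) :
    ⟪fderiv ℝ (gradient u) x v, w⟫ = ⟪fderiv ℝ (gradient u) x w, v⟫ := by
  have hs := (hu.contDiffAt (x := x)).isSymmSndFDerivAt (by simp)
  have hd : DifferentiableAt ℝ (fderiv ℝ u) x :=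
    (hu.fderiv_right (m := 1) (by norm_num)).differentiable one_ne_zero x
  have e : ∀ v, fderiv ℝ (gradient u) x v =
      (InnerProductSpace.toDual ℝ (Euc n)).symm (fderiv ℝ (fderiv ℝ u) x v) := by
    intro v
    have h1 : HasFDerivAt (gradient u) (((InnerProductSpace.toDual ℝ (Euc n)).symm.toContinuousLinearEquiv.toContinuousLinearMap.restrictScalars ℝ).comp (fderiv ℝ (fderiv ℝ u) x)) x :=
      (((InnerProductSpace.toDual ℝ (Euc n)).symm.toContinuousLinearEquiv.toContinuousLinearMap.restrictScalars ℝ).hasFDerivAt).comp x hd.hasFDerivAt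
    rw [h1.fderiv]
    rfl
  rw [e, e, InnerProductSpace.toDual_symm_apply, InnerProductSpace.toDual_symm_apply]
  exact hs v w

theorem fderiv_inner_grad {n : ℕ} (ψ : Euc n → ℝ) (x v : Euc n) :
    fderiv ℝ ψ x v = ⟪gradient ψ x, v⟫ := by
  rw [inner_gradient_left]

theorem hasFDerivAt_WW {n : ℕ} {u : Euc n → ℝ} (hu : ContDiff ℝ 2 u) (x : Euc n) :
    HasFDerivAt (WW u) ((WW u x)⁻¹ • ((innerSL ℝ (gradient u x)).comp (fderiv ℝ (gradient u) x))) x := by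
  have hg : ContDiff ℝ 1 (gradient u) := contDiff_gradient (m := 1) (k := 2) le_rfl hu
  have h1 := ((hg.differentiable one_ne_zero x).hasFDerivAt).norm_sq
  have h2 := (h1.const_add 1).sqrt (by positivity)
  refine h2.congr_fderiv ?_
  ext v
  simp [WW]
  field_simp

/-- `P = ∇u/√(1+|∇u|²)`. -/
def PP {n : ℕ} (u : Euc n → ℝ) (x : Euc n) : Euc n := (WW u x)⁻¹ • gradient u x

theorem fderiv_PP {n : ℕ} {u : Euc n → ℝ} (hu : ContDiff ℝ 2 u) (x v : Euc n) :
    fderiv ℝ (PP u) x v = (WW u x)⁻¹ • fderiv ℝ (gradient u) x v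
      - ((WW u x)⁻¹ ^ 3 * ⟪gradient u x, fderiv ℝ (gradient u) x v⟫) • gradient u x := by
  have hg : ContDiff ℝ 1 (gradient u) := contDiff_gradient (m := 1) (k := 2) le_rfl hu
  have hW := (WW_pos u x).ne'
  have h1 := ((hasDerivAt_inv hW).comp_hasFDerivAt x (hasFDerivAt_WW hu x)).smul
    ((hg.differentiable one_ne_zero x).hasFDerivAt)
  have h2 : fderiv ℝ (PP u) x = _ := h1.fderiv
  rw [h2]
  simp only [_root_.add_apply, _root_.smul_apply,
    ContinuousLinearMap.smulRight_apply, ContinuousLinearMap.comp_apply, innerSL_apply_apply,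
    Function.comp, smul_eq_mul]
  rw [sub_eq_add_neg, ← neg_smul]
  congr 2
  field_simp

theorem contDiff_PP {n : ℕ} {u : Euc n → ℝ} {m : ℕ} (hg : ContDiff ℝ m (gradient u)) :
    ContDiff ℝ m (PP u) := by
  unfold PP
  exact ((contDiff_WW hg).inv (fun x => (WW_pos u x).ne')).smul hg

theorem weak_C1 {n : ℕ} {f : ℝ → ℝ} {u : Euc n → ℝ} (hf : ContDiff ℝ 1 f) (hu : ContDiff ℝ 3 u)
    (hw : IsWeakSolution (Set.univ : Set (Euc n)) f u)
    (ψ : Euc n → ℝ) (h : ContDiff ℝ 1 ψ) (hc : HasCompactSupport ψ) :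
    ∫ x, fderiv ℝ ψ x (PP u x) = ∫ x, f (u x) * ψ x := by
  obtain ⟨φ, hφ, hlim⟩ := approx_integral ψ h hc
  have hP : Continuous (PP u) :=
    (contDiff_PP (contDiff_gradient (m := 2) (k := 3) le_rfl hu)).continuous
  have h1 := hlim (fun x _ v => ⟪v, PP u x⟫) (by fun_prop) (by simp)
  have hfu : Continuous (fun x => f (u x)) := hf.continuous.comp hu.continuous
  have h2 := hlim (fun x a _ => f (u x) * a) (by fun_prop) (by simp)
  have h3 : ∀ k, ∫ x, ⟪gradient (φ k) x, PP u x⟫ = ∫ x, f (u x) * φ k x := by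
    intro k
    have := hw.2.2.2 (φ k) (hφ k)
    rw [setIntegral_univ, setIntegral_univ] at this
    rw [← this]
    refine integral_congr_ae (Eventually.of_forall fun x => ?_)
    simp only [PP, inner_smul_right, WW]
    rw [real_inner_comm]
    field_simp
  simp only [fderiv_inner_grad]
  refine tendsto_nhds_unique h1 ?_
  simp_rw [h3]
  exact h2

theorem stab_C1 {n : ℕ} {f : ℝ → ℝ} {u : Euc n → ℝ} (hf : ContDiff ℝ 1 f) (hu : ContDiff ℝ 3 u)
    (hs : IsStableSolution (Set.univ : Set (Euc n)) f u)
    (ξ : Euc n → ℝ) (h : ContDiff ℝ 1 ξ) (hc : HasCompactSupport ξ) :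
    ∫ x, deriv f (u x) * ξ x ^ 2 ≤ ∫ x, (‖gradient ξ x‖ ^ 2 * (WW u x)⁻¹
      - ⟪gradient u x, gradient ξ x⟫ ^ 2 * (WW u x)⁻¹ ^ 3) := by
  obtain ⟨φ, hφ, hlim⟩ := approx_integral ξ h hc
  have hg2 := contDiff_gradient (m := 2) (k := 3) le_rfl hu
  have hg : Continuous (gradient u) := hg2.continuous
  have hWi : Continuous (fun x => (WW u x)⁻¹) :=
    (contDiff_WW hg2).continuous.inv₀ (fun x => (WW_pos u x).ne')
  have hfu : Continuous (fun x => deriv f (u x)) :=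
    (hf.continuous_deriv_one).comp hu.continuous
  have h1 := hlim (fun x _ v => ‖v‖ ^ 2 * (WW u x)⁻¹ - ⟪gradient u x, v⟫ ^ 2 * (WW u x)⁻¹ ^ 3)
    (by
      have aux : ∀ i : Euc n → ℝ, Continuous i → Continuous (fun p : Euc n × ℝ × Euc n =>
          ‖p.2.2‖ ^ 2 * i p.1 - ⟪gradient u p.1, p.2.2⟫ ^ 2 * i p.1 ^ 3) := by
        intro i hi; fun_prop
      exact aux _ hWi) (by simp)
  have h2 := hlim (fun x a _ => deriv f (u x) * a ^ 2) (by fun_prop) (by simp)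
  refine le_of_tendsto_of_tendsto' h2 h1 fun k => ?_
  have := hs.2.2 (φ k) (hφ k)
  rw [setIntegral_univ, setIntegral_univ] at this
  refine this.trans_eq ?_
  refine integral_congr_ae (Eventually.of_forall fun x => ?_)
  simp only [WW_rpow]
  simp only [WW]
  field_simp

theorem integ_of {n : ℕ} {ψ F : Euc n → ℝ} (hc : HasCompactSupport ψ) (hF : Continuous F)
    (h : ∀ x, x ∉ tsupport ψ → F x = 0) : Integrable F :=
  hF.integrable_of_hasCompactSupport (HasCompactSupport.intro hc h)

theorem zero_out {n : ℕ} {ψ : Euc n → ℝ} {x : Euc n} (hx : x ∉ tsupport ψ) :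
    ψ x = 0 ∧ fderiv ℝ ψ x = 0 := by
  refine ⟨image_eq_zero_of_notMem_tsupport hx, ?_⟩
  by_contra h'
  exact hx (support_fderiv_subset ℝ h')

theorem zero_out2 {n : ℕ} {ψ : Euc n → ℝ} {x : Euc n} (hx : x ∉ tsupport ψ) :
    fderiv ℝ (fderiv ℝ ψ) x = 0 := by
  by_contra h'
  exact hx (tsupport_fderiv_subset ℝ (support_fderiv_subset ℝ h'))

theorem lin_weak {n : ℕ} {f : ℝ → ℝ} {u : Euc n → ℝ} (hf : ContDiff ℝ 1 f) (hu : ContDiff ℝ 3 u)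
    (hw : IsWeakSolution (Set.univ : Set (Euc n)) f u) (x₀ : Euc n)
    (ψ : Euc n → ℝ) (h : ContDiff ℝ 2 ψ) (hc : HasCompactSupport ψ) :
    ∫ x, fderiv ℝ ψ x (fderiv ℝ (PP u) x (x - x₀) - PP u x) =
      ∫ x, deriv f (u x) * ⟪x - x₀, gradient u x⟫ * ψ x := by
  have hg2 : ContDiff ℝ 2 (gradient u) := contDiff_gradient (m := 2) (k := 3) le_rfl hu
  have hP2 : ContDiff ℝ 2 (PP u) := contDiff_PP (m := 2) hg2
  have hP1 : ContDiff ℝ 1 (PP u) := hP2.of_le (by norm_num)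
  have hu1 : ContDiff ℝ 1 u := hu.of_le (by norm_num)
  have hψ1 : ContDiff ℝ 1 ψ := h.of_le (by norm_num)
  have hdψ : ContDiff ℝ 1 (fderiv ℝ ψ) := h.fderiv_right (by norm_num)
  have hX : ContDiff ℝ 1 (fun x : Euc n => x - x₀) := contDiff_id.sub contDiff_const
  -- derivatives
  have dX : ∀ x : Euc n, HasFDerivAt (fun x : Euc n => x - x₀) (ContinuousLinearMap.id ℝ (Euc n)) x :=
    fun x => (hasFDerivAt_id x).sub_const _
  have dψ : ∀ x, HasFDerivAt ψ (fderiv ℝ ψ x) x :=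
    fun x => (hψ1.differentiable one_ne_zero x).hasFDerivAt
  have ddψ : ∀ x, HasFDerivAt (fderiv ℝ ψ) (fderiv ℝ (fderiv ℝ ψ) x) x :=
    fun x => (hdψ.differentiable one_ne_zero x).hasFDerivAt
  have dP : ∀ x, HasFDerivAt (PP u) (fderiv ℝ (PP u) x) x :=
    fun x => (hP1.differentiable one_ne_zero x).hasFDerivAt
  have dfu : ∀ x, HasFDerivAt (fun x => f (u x)) (deriv f (u x) • fderiv ℝ u x) x :=
    fun x => ((hf.differentiable one_ne_zero (u x)).hasDerivAt).comp_hasFDerivAt x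
      (hu1.differentiable one_ne_zero x).hasFDerivAt
  -- continuity
  have c1 : Continuous (fderiv ℝ (PP u)) := hP1.continuous_fderiv one_ne_zero
  have c2 : Continuous (fderiv ℝ ψ) := hdψ.continuous
  have c3 : Continuous (PP u) := hP1.continuous
  have c4 : Continuous (fun x => deriv f (u x)) := hf.continuous_deriv_one.comp hu.continuous
  have c5 : Continuous (gradient u) := hg2.continuous
  have c6 : Continuous (fun x => f (u x)) := hf.continuous.comp hu.continuous
  have c7 : Continuous ψ := h.continuous
  have c8 : Continuous (fderiv ℝ (fderiv ℝ ψ)) := hdψ.continuous_fderiv one_ne_zero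
  -- integrability
  have i1 : Integrable (fun x => fderiv ℝ ψ x (PP u x)) :=
    integ_of hc (by fun_prop) (fun x hx => by simp [(zero_out hx).2])
  have i2 : Integrable (fun x => fderiv ℝ ψ x (fderiv ℝ (PP u) x (x - x₀))) :=
    integ_of hc (by fun_prop) (fun x hx => by simp [(zero_out hx).2])
  have i3 : Integrable (fun x => deriv f (u x) * ⟪x - x₀, gradient u x⟫ * ψ x) :=
    integ_of hc (by fun_prop) (fun x hx => by simp [(zero_out hx).1])
  have i4 : Integrable (fun x => f (u x) * ψ x) :=
    integ_of hc (by fun_prop) (fun x hx => by simp [(zero_out hx).1])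
  have i5 : Integrable (fun x => f (u x) * fderiv ℝ ψ x (x - x₀)) :=
    integ_of hc (by fun_prop) (fun x hx => by simp [(zero_out hx).2])
  have i6 : Integrable (fun x => fderiv ℝ (fderiv ℝ ψ) x (x - x₀) (PP u x)) :=
    integ_of hc (by fun_prop) (fun x hx => by simp [zero_out2 hx])
  -- test function
  have hw' := weak_C1 hf hu hw (fun x => (n : ℝ) * ψ x + fderiv ℝ ψ x (x - x₀))
    ((contDiff_const.mul hψ1).add (hdψ.clm_apply hX))
    (HasCompactSupport.intro hc (fun x hx => by simp [(zero_out hx).1, (zero_out hx).2]))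
  have e1 : ∀ x, fderiv ℝ (fun x => (n : ℝ) * ψ x + fderiv ℝ ψ x (x - x₀)) x (PP u x) =
      ((n : ℝ) + 1) * fderiv ℝ ψ x (PP u x) + fderiv ℝ (fderiv ℝ ψ) x (x - x₀) (PP u x) := by
    intro x
    have := (((dψ x).const_mul (n : ℝ)).add ((ddψ x).clm_apply (dX x))).fderiv
    have hs := (h.contDiffAt (x := x)).isSymmSndFDerivAt (by simp)
    rw [← hs.eq (PP u x) (x - x₀)]
    refine (congrArg (fun T : Euc n →L[ℝ] ℝ => T (PP u x)) this).trans ?_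
    simp
    ring
  have r1 := radial_ibp x₀ (fun x => fderiv ℝ ψ x (PP u x)) (hdψ.clm_apply hP1)
    (HasCompactSupport.intro hc (fun x hx => by simp [(zero_out hx).2]))
  have e2 : ∀ x, fderiv ℝ (fun x => fderiv ℝ ψ x (PP u x)) x (x - x₀) =
      fderiv ℝ (fderiv ℝ ψ) x (x - x₀) (PP u x) + fderiv ℝ ψ x (fderiv ℝ (PP u) x (x - x₀)) := by
    intro x
    have := ((ddψ x).clm_apply (dP x)).fderiv
    refine (congrArg (fun T : Euc n →L[ℝ] ℝ => T (x - x₀)) this).trans ?_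
    simp
    ring
  have r2 := radial_ibp x₀ (fun x => f (u x) * ψ x) ((hf.comp hu1).mul hψ1)
    (HasCompactSupport.intro hc (fun x hx => by simp [(zero_out hx).1]))
  have e3 : ∀ x, fderiv ℝ (fun x => f (u x) * ψ x) x (x - x₀) =
      deriv f (u x) * ⟪x - x₀, gradient u x⟫ * ψ x + f (u x) * fderiv ℝ ψ x (x - x₀) := by
    intro x
    have := ((dfu x).mul (dψ x)).fderiv
    refine (congrArg (fun T : Euc n →L[ℝ] ℝ => T (x - x₀)) this).trans ?_
    rw [real_inner_comm (gradient u x) (x - x₀), ← fderiv_inner_grad]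
    simp only [_root_.add_apply, _root_.smul_apply, smul_eq_mul]
    ring
  simp only [e1] at hw'
  simp only [e2] at r1
  simp only [e3] at r2
  rw [integral_add (i1.const_mul _) i6, integral_const_mul] at hw'
  rw [integral_add i6 i2] at r1
  rw [integral_add i3 i5] at r2
  have e4 : ∫ x, f (u x) * ((n : ℝ) * ψ x + fderiv ℝ ψ x (x - x₀)) =
      (n : ℝ) * (∫ x, f (u x) * ψ x) + ∫ x, f (u x) * fderiv ℝ ψ x (x - x₀) := by
    rw [← integral_const_mul, ← integral_add (i4.const_mul _) i5]
    refine integral_congr_ae (Eventually.of_forall fun x => ?_)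
    simp only
    ring
  rw [e4] at hw'
  have e5 : ∀ x, fderiv ℝ ψ x (fderiv ℝ (PP u) x (x - x₀) - PP u x) =
      fderiv ℝ ψ x (fderiv ℝ (PP u) x (x - x₀)) - fderiv ℝ ψ x (PP u x) := fun x => map_sub _ _ _
  simp only [e5]
  rw [integral_sub i2 i1]
  linarith

/-- The integrand of the key inequality, in terms of `η` and its gradient `h`. -/
noncomputable def JJ {n : ℕ} (u : Euc n → ℝ) (x₀ x : Euc n) (e : ℝ) (h : Euc n) : ℝ :=
  ⟪x - x₀, gradient u x⟫ ^ 2 * (‖h‖ ^ 2 * (WW u x)⁻¹ - ⟪gradient u x, h⟫ ^ 2 * (WW u x)⁻¹ ^ 3)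
  + 2 * ⟪x - x₀, gradient u x⟫ * ((WW u x)⁻¹ + (WW u x)⁻¹ ^ 3) * e * ⟪gradient u x, h⟫
  + e ^ 2 * (((WW u x)⁻¹ + (WW u x)⁻¹ ^ 3) * ‖gradient u x‖ ^ 2
      - n * (‖gradient u x‖ ^ 2 * (WW u x)⁻¹))
  - 2 * (‖gradient u x‖ ^ 2 * (WW u x)⁻¹) * e * ⟪x - x₀, h⟫

theorem cont_JJ {n : ℕ} {u : Euc n → ℝ} (hu : ContDiff ℝ 3 u) (x₀ : Euc n) {e : Euc n → ℝ}
    {h : Euc n → Euc n} (he : Continuous e) (hh : Continuous h) :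
    Continuous (fun x => JJ u x₀ x (e x) (h x)) := by
  have hg2 : ContDiff ℝ 2 (gradient u) := contDiff_gradient (m := 2) (k := 3) le_rfl hu
  have c5 : Continuous (gradient u) := hg2.continuous
  have hWi : Continuous (fun x => (WW u x)⁻¹) :=
    (contDiff_WW (m := 2) hg2).continuous.inv₀ (fun x => (WW_pos u x).ne')
  unfold JJ
  generalize hi : (fun x => (WW u x)⁻¹) = i at hWi
  have : ∀ x, (WW u x)⁻¹ = i x := fun x => congrFun hi x
  simp only [this]
  fun_prop

theorem key_ineq_s4 {n : ℕ} {f : ℝ → ℝ} {u : Euc n → ℝ} (hf : ContDiff ℝ 1 f) (hu : ContDiff ℝ 3 u)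
    (hs : IsStableSolution (Set.univ : Set (Euc n)) f u) (x₀ : Euc n)
    (η : Euc n → ℝ) (h : ContDiff ℝ 2 η) (hc : HasCompactSupport η) :
    0 ≤ ∫ x, JJ u x₀ x (η x) (gradient η x) := by
  have hg2 : ContDiff ℝ 2 (gradient u) := contDiff_gradient (m := 2) (k := 3) le_rfl hu
  have hg1 : ContDiff ℝ 1 (gradient u) := hg2.of_le (by norm_num)
  have hu2 : ContDiff ℝ 2 u := hu.of_le (by norm_num)
  have hP2 : ContDiff ℝ 2 (PP u) := contDiff_PP (m := 2) hg2
  have hP1 : ContDiff ℝ 1 (PP u) := hP2.of_le (by norm_num)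
  have hW2 : ContDiff ℝ 2 (WW u) := contDiff_WW (m := 2) hg2
  have hη1 : ContDiff ℝ 1 η := h.of_le (by norm_num)
  set c : Euc n → ℝ := fun x => ⟪x - x₀, gradient u x⟫ with hcdef
  have hc2 : ContDiff ℝ 2 c := (contDiff_id.sub contDiff_const).inner ℝ hg2
  have hc1 : ContDiff ℝ 1 c := hc2.of_le (by norm_num)
  set G : Euc n → ℝ := fun x => WW u x - (WW u x)⁻¹ with hGdef
  have hG1 : ContDiff ℝ 1 G :=
    (hW2.sub (hW2.inv (fun x => (WW_pos u x).ne'))).of_le (by norm_num)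
  -- derivatives
  have dX : ∀ x : Euc n, HasFDerivAt (fun x : Euc n => x - x₀) (ContinuousLinearMap.id ℝ (Euc n)) x :=
    fun x => (hasFDerivAt_id x).sub_const _
  have dg : ∀ x, HasFDerivAt (gradient u) (fderiv ℝ (gradient u) x) x :=
    fun x => (hg1.differentiable one_ne_zero x).hasFDerivAt
  have dη : ∀ x, HasFDerivAt η (fderiv ℝ η x) x :=
    fun x => (hη1.differentiable one_ne_zero x).hasFDerivAt
  have dc : ∀ x, HasFDerivAt c (innerSL ℝ (gradient u x + fderiv ℝ (gradient u) x (x - x₀))) x := by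
    intro x
    refine ((dX x).inner ℝ (dg x)).congr_fderiv ?_
    ext v
    simp only [ContinuousLinearMap.comp_apply, ContinuousLinearMap.prod_apply,
      fderivInnerCLM_apply, innerSL_apply_apply, inner_add_left, ContinuousLinearMap.id_apply]
    rw [← hess_symm hu2 x v (x - x₀), real_inner_comm (x - x₀), real_inner_comm (gradient u x) v]
    ring
  have dG : ∀ x v, fderiv ℝ G x v = ((WW u x)⁻¹ + (WW u x)⁻¹ ^ 3) *
      ⟪gradient u x, fderiv ℝ (gradient u) x v⟫ := by
    intro x v
    have hW := (WW_pos u x).ne'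
    have := ((hasFDerivAt_WW hu2 x).sub
      ((hasDerivAt_inv hW).comp_hasFDerivAt x (hasFDerivAt_WW hu2 x))).fderiv
    refine (congrArg (fun T : Euc n →L[ℝ] ℝ => T v) this).trans ?_
    simp
    field_simp
  -- xi and psi
  set ξ : Euc n → ℝ := fun x => c x * η x with hξ
  set ψ : Euc n → ℝ := fun x => c x * η x ^ 2 with hψ
  have hψ2 : ContDiff ℝ 2 ψ := hc2.mul (h.pow 2)
  have hψc : HasCompactSupport ψ :=
    HasCompactSupport.intro hc (fun x hx => by simp [hψ, (zero_out hx).1])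
  have hξ1 : ContDiff ℝ 1 ξ := hc1.mul hη1
  have hξc : HasCompactSupport ξ :=
    HasCompactSupport.intro hc (fun x hx => by simp [hξ, (zero_out hx).1])
  have gξ : ∀ x, gradient ξ x = c x • gradient η x +
      η x • (gradient u x + fderiv ℝ (gradient u) x (x - x₀)) := by
    intro x
    refine ext_inner_right ℝ fun v => ?_
    rw [← fderiv_inner_grad]
    refine (congrArg (fun T : Euc n →L[ℝ] ℝ => T v) ((dc x).mul (dη x)).fderiv).trans ?_
    simp [inner_add_left, inner_smul_left, inner_sub_left]
  have dψ : ∀ x v, fderiv ℝ ψ x v = 2 * c x * η x * ⟪gradient η x, v⟫ +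
      η x ^ 2 * ⟪gradient u x + fderiv ℝ (gradient u) x (x - x₀), v⟫ := by
    intro x v
    refine (congrArg (fun T : Euc n →L[ℝ] ℝ => T v) ((dc x).mul ((dη x).pow 2)).fderiv).trans ?_
    simp [inner_add_left, inner_sub_left]
    ring
  have st := stab_C1 hf hu hs ξ hξ1 hξc
  have li := lin_weak hf hu hs.1 x₀ ψ hψ2 hψc
  have e1 : ∀ x, deriv f (u x) * ⟪x - x₀, gradient u x⟫ * ψ x = deriv f (u x) * ξ x ^ 2 := by
    intro x; simp only [hξ, hψ, hcdef]; ring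
  simp only [e1] at li
  rw [← li] at st
  have r3 := radial_ibp x₀ (fun x => η x ^ 2 * G x) ((hη1.pow 2).mul hG1)
    (HasCompactSupport.intro hc (fun x hx => by simp [(zero_out hx).1]))
  have d3 : ∀ x v, fderiv ℝ (fun x => η x ^ 2 * G x) x v =
      2 * η x * ⟪gradient η x, v⟫ * G x + η x ^ 2 * (((WW u x)⁻¹ + (WW u x)⁻¹ ^ 3) *
      ⟪gradient u x, fderiv ℝ (gradient u) x v⟫) := by
    intro x v
    refine (congrArg (fun T : Euc n →L[ℝ] ℝ => T v)
      (((dη x).pow 2).mul (hG1.differentiable one_ne_zero x).hasFDerivAt).fderiv).trans ?_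
    simp [dG]
    ring
  -- continuity
  have c1 : Continuous (fderiv ℝ (PP u)) := hP1.continuous_fderiv one_ne_zero
  have c2 : Continuous (fderiv ℝ ψ) := hψ2.continuous_fderiv two_ne_zero
  have c3 : Continuous (PP u) := hP1.continuous
  have c5 : Continuous (gradient u) := hg2.continuous
  have c6 : Continuous (gradient ξ) := cont_gradient hξ1
  have c7 : Continuous (gradient η) := cont_gradient hη1
  have c8 : Continuous G := hG1.continuous
  have c9 : Continuous η := h.continuous
  have c10 : Continuous (fderiv ℝ (fun x => η x ^ 2 * G x)) :=
    ((hη1.pow 2).mul hG1).continuous_fderiv one_ne_zero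
  have hWi : Continuous (fun x => (WW u x)⁻¹) :=
    hW2.continuous.inv₀ (fun x => (WW_pos u x).ne')
  have gη0 : ∀ x, x ∉ tsupport η → gradient η x = 0 := by
    intro x hx; unfold gradient; rw [(zero_out hx).2]; simp
  have i1 : Integrable (fun x => ‖gradient ξ x‖ ^ 2 * (WW u x)⁻¹
      - ⟪gradient u x, gradient ξ x⟫ ^ 2 * (WW u x)⁻¹ ^ 3) := by
    refine integ_of hc ?_ (fun x hx => by simp [gξ, (zero_out hx).1, gη0 x hx])
    exact ((c6.norm.pow 2).mul hWi).sub (((c5.inner c6).pow 2).mul (hWi.pow 3))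
  have i2 : Integrable (fun x => fderiv ℝ ψ x (fderiv ℝ (PP u) x (x - x₀) - PP u x)) :=
    integ_of hc (by fun_prop) (fun x hx => by simp only [dψ]; simp [(zero_out hx).1])
  have i3 : Integrable (fun x => η x ^ 2 * G x) :=
    integ_of hc (by fun_prop) (fun x hx => by simp [(zero_out hx).1])
  have i4 : Integrable (fun x => fderiv ℝ (fun x => η x ^ 2 * G x) x (x - x₀)) :=
    integ_of hc (by fun_prop) (fun x hx => by simp only [d3]; simp [(zero_out hx).1])
  have main : ∀ x, JJ u x₀ x (η x) (gradient η x) =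
      ((‖gradient ξ x‖ ^ 2 * (WW u x)⁻¹
      - ⟪gradient u x, gradient ξ x⟫ ^ 2 * (WW u x)⁻¹ ^ 3)
      - fderiv ℝ ψ x (fderiv ℝ (PP u) x (x - x₀) - PP u x))
      - (fderiv ℝ (fun x => η x ^ 2 * G x) x (x - x₀) + (n : ℝ) * (η x ^ 2 * G x)) := by
    intro x
    rw [d3, dψ, gξ, fderiv_PP hu2]
    have hW := WW_pos u x
    have hgg : ‖gradient u x‖ ^ 2 = WW u x ^ 2 - 1 := by rw [WW_sq]; ring
    have hgg' : ⟪gradient u x, gradient u x⟫ = WW u x ^ 2 - 1 := by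
      rw [real_inner_self_eq_norm_sq, hgg]
    unfold JJ
    simp only [hGdef, PP]
    have hcx : ⟪x - x₀, gradient u x⟫ = c x := rfl
    rw [hcx]
    generalize x - x₀ = X
    generalize fderiv ℝ (gradient u) x X = e
    rw [← real_inner_self_eq_norm_sq (c x • gradient η x + η x • (gradient u x + e)),
      ← real_inner_self_eq_norm_sq (gradient η x)]
    simp only [inner_add_left, inner_add_right, inner_sub_right, inner_smul_left, inner_smul_right,
      hgg, hgg', conj_trivial]
    rw [real_inner_comm (gradient η x) e, real_inner_comm (gradient η x) (gradient u x),
      real_inner_comm (gradient u x) e, real_inner_comm (gradient η x) X]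
    generalize ⟪gradient η x, gradient η x⟫ = hh
    generalize ⟪gradient η x, X⟫ = hX
    generalize ⟪gradient η x, gradient u x⟫ = hg
    generalize ⟪gradient η x, e⟫ = he
    generalize ⟪gradient u x, e⟫ = ge
    generalize ⟪e, e⟫ = ee
    generalize WW u x = W at *
    generalize c x = cc
    generalize η x = y
    have hW' := hW.ne'
    field_simp
    ring
  simp only [main]
  have a1 := integral_sub (i1.sub i2) (i4.add (i3.const_mul (n : ℝ)))
  have a2 := integral_sub i1 i2
  have a3 := integral_add i4 (i3.const_mul (n : ℝ))
  rw [integral_const_mul, r3] at a3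
  simp only [Pi.sub_apply, Pi.add_apply] at a1
  rw [a1, a2, a3]
  linarith

theorem alg_Q (N a b t y : ℝ) (hN : 2 ≤ N) (ha : 0 ≤ a) (haN : a ≤ N - 2)
    (ha2 : (a / 2 - 1) ^ 2 ≤ N - 1) (hb : 0 ≤ b) (hba : b ≤ a) (ht : 0 ≤ t) (htb : t ≤ b)
    (hy : y ≤ 1) :
    0 ≤ N - 1 - b + t - b * t / 4 + t ^ 2 / 4 - y * (1 - t / 2) ^ 2 := by
  have e1 : 0 ≤ N - 2 + b - b ^ 2 / 4 := by
    rcases ha.eq_or_lt with h0 | h0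
    · have : b = 0 := by linarith
      subst this; linarith
    · have : 0 ≤ a * (N - 2 + b - b ^ 2 / 4) := by
        nlinarith [mul_nonneg (sub_nonneg.2 hba) (sub_nonneg.2 hN), mul_nonneg hb (sub_nonneg.2 ha2),
          mul_nonneg (mul_nonneg hb ha) (sub_nonneg.2 hba)]
      exact nonneg_of_mul_nonneg_right this h0
  have e2 : 0 ≤ N - 2 - b + 2 * t - b * t / 4 := by
    rcases hb.eq_or_lt with h0 | h0
    · have : t = 0 := by linarith
      subst this; linarith
    · have : 0 ≤ b * (N - 2 - b + 2 * t - b * t / 4) := by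
        nlinarith [mul_nonneg (sub_nonneg.2 htb) (by linarith : 0 ≤ N - 2 - b), mul_nonneg ht e1]
      exact nonneg_of_mul_nonneg_right this h0
  nlinarith [mul_nonneg (sub_nonneg.2 hy) (sq_nonneg (1 - t / 2))]

theorem alg_Qs (N a b y : ℝ) (hN : 2 ≤ N)
    (ha2 : (a / 2 - 1) ^ 2 ≤ N - 1) (hb : 0 ≤ b) (hba : b ≤ a) (hy0 : 0 < y)
    (hy : y < 1) :
    0 < N - 1 - b + b - b * b / 4 + b ^ 2 / 4 - y * (1 - b / 2) ^ 2 := by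
  have : (1 - b / 2) ^ 2 ≤ N - 1 := by
    rcases le_total b 2 with h | h
    · nlinarith
    · nlinarith
  nlinarith

theorem alg_JJ (N a e k r2 s2 c w : ℝ) (hN : 2 ≤ N) (ha : 0 ≤ a) (haN : a ≤ N - 2)
    (ha2 : (a / 2 - 1) ^ 2 ≤ N - 1) (hk : k * (1 + r2) = 1) (hr : 0 ≤ r2) (hs : 0 ≤ s2)
    (hc : c ^ 2 ≤ r2 * s2) (hw : 0 < w) (hw2 : w ^ 2 * (1 + s2) = 1) :
    c ^ 2 * ((a ^ 2 / 4 * k ^ 2 * e ^ 2 * r2) * w - (-(a / 2) * k * e * c) ^ 2 * w ^ 3)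
      + 2 * c * (w + w ^ 3) * e * (-(a / 2) * k * e * c)
      + e ^ 2 * ((w + w ^ 3) * s2 - N * (s2 * w))
      - 2 * (s2 * w) * e * (-(a / 2) * k * e * r2) ≤ 0 ∧
    (e ≠ 0 → 0 < s2 → c ^ 2 = r2 * s2 →
    c ^ 2 * ((a ^ 2 / 4 * k ^ 2 * e ^ 2 * r2) * w - (-(a / 2) * k * e * c) ^ 2 * w ^ 3)
      + 2 * c * (w + w ^ 3) * e * (-(a / 2) * k * e * c)
      + e ^ 2 * ((w + w ^ 3) * s2 - N * (s2 * w))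
      - 2 * (s2 * w) * e * (-(a / 2) * k * e * r2) < 0) := by
  have hk0 : 0 < k := by
    by_contra h; push Not at h; nlinarith
  rcases hs.eq_or_lt with h0 | h0
  · have : c = 0 := by
      rw [← h0] at hc; have : c ^ 2 = 0 := le_antisymm (by simpa using hc) (sq_nonneg c)
      exact pow_eq_zero_iff (two_ne_zero) |>.1 this
    subst this; rw [← h0]; constructor
    · apply le_of_eq; ring
    · intro _ h; exact absurd h (lt_irrefl _)
  obtain ⟨θ, hθ⟩ : ∃ θ, k * c ^ 2 = θ * s2 := ⟨k * c ^ 2 / s2, by field_simp⟩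
  obtain ⟨y, hy⟩ : ∃ y, y = w ^ 2 := ⟨_, rfl⟩
  have hsy : y * s2 = 1 - y := by rw [hy]; linarith
  have hθ0 : 0 ≤ θ := by
    by_contra h; push Not at h; nlinarith [mul_nonneg hk0.le (sq_nonneg c)]
  have hθk : θ ≤ k * r2 := by
    have : θ * s2 ≤ k * r2 * s2 := by rw [← hθ]; nlinarith
    exact le_of_mul_le_mul_right this h0
  have hκ1 : k * r2 ≤ 1 := by nlinarith
  have hy0 : 0 < y := by rw [hy]; positivity
  have hy1 : y < 1 := by nlinarith
  have key : c ^ 2 * ((a ^ 2 / 4 * k ^ 2 * e ^ 2 * r2) * w - (-(a / 2) * k * e * c) ^ 2 * w ^ 3)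
      + 2 * c * (w + w ^ 3) * e * (-(a / 2) * k * e * c)
      + e ^ 2 * ((w + w ^ 3) * s2 - N * (s2 * w))
      - 2 * (s2 * w) * e * (-(a / 2) * k * e * r2)
      = - (e ^ 2 * w * s2 * (N - 1 - a * (k * r2) + a * θ - a * (k * r2) * (a * θ) / 4
        + (a * θ) ^ 2 / 4 - y * (1 - a * θ / 2) ^ 2)) := by
    have h1 : c ^ 2 * ((a ^ 2 / 4 * k ^ 2 * e ^ 2 * r2) * w - (-(a / 2) * k * e * c) ^ 2 * w ^ 3)
      + 2 * c * (w + w ^ 3) * e * (-(a / 2) * k * e * c)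
      + e ^ 2 * ((w + w ^ 3) * s2 - N * (s2 * w))
      - 2 * (s2 * w) * e * (-(a / 2) * k * e * r2)
      = e ^ 2 * w * (a ^ 2 / 4 * (k * c ^ 2) * (k * r2) - a ^ 2 / 4 * (k * c ^ 2) ^ 2 * w ^ 2
        - a * (k * c ^ 2) * (1 + w ^ 2) + s2 * (1 + w ^ 2 - N) + a * (k * r2) * s2) := by ring
    rw [h1, hθ, ← hy]
    linear_combination (- e ^ 2 * w * (a ^ 2 / 4 * θ ^ 2 * s2)) * hsy
  rw [key]
  have hb : 0 ≤ a * (k * r2) := by positivity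
  have hba : a * (k * r2) ≤ a := mul_le_of_le_one_right ha hκ1
  have ht : a * θ ≤ a * (k * r2) := mul_le_mul_of_nonneg_left hθk ha
  refine ⟨?_, ?_⟩
  · have := alg_Q N a (a * (k * r2)) (a * θ) y hN ha haN ha2 hb hba (by positivity) ht hy1.le
    have : 0 ≤ e ^ 2 * w * s2 * (N - 1 - a * (k * r2) + a * θ - a * (k * r2) * (a * θ) / 4
        + (a * θ) ^ 2 / 4 - y * (1 - a * θ / 2) ^ 2) := by positivity
    linarith
  · intro he _ hce
    have : θ = k * r2 := by
      have : θ * s2 = k * r2 * s2 := by rw [← hθ, hce]; ring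
      exact mul_right_cancel₀ h0.ne' this
    rw [this]
    have := alg_Qs N a (a * (k * r2)) y hN ha2 hb hba hy0 hy1
    have he2 : 0 < e ^ 2 := by positivity
    have := mul_pos (mul_pos (mul_pos he2 hw) h0) this
    linarith

/-- The radial weight. -/
noncomputable def EE {n : ℕ} (a : ℝ) (x₀ x : Euc n) : ℝ := (1 + ‖x - x₀‖ ^ 2) ^ (-(a / 4))

theorem EE_pos {n : ℕ} (a : ℝ) (x₀ x : Euc n) : 0 < EE a x₀ x := by unfold EE; positivity

theorem contDiff_EE {n : ℕ} (a : ℝ) (x₀ : Euc n) : ContDiff ℝ 2 (EE a x₀) := by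
  unfold EE
  apply ContDiff.rpow_const_of_ne
  · exact contDiff_const.add ((contDiff_id.sub contDiff_const).norm_sq ℝ)
  · intro x; positivity

theorem grad_EE {n : ℕ} (a : ℝ) (x₀ x : Euc n) :
    gradient (EE a x₀) x = (-(a / 2) * (1 + ‖x - x₀‖ ^ 2)⁻¹ * EE a x₀ x) • (x - x₀) := by
  have h1 : HasFDerivAt (fun x : Euc n => 1 + ‖x - x₀‖ ^ 2) (2 • innerSL ℝ (x - x₀)) x := by
    have := ((hasFDerivAt_id x).sub_const x₀).norm_sq.const_add 1
    simpa using this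
  have hp : 0 < 1 + ‖x - x₀‖ ^ 2 := by positivity
  have h2 := h1.rpow_const (p := -(a / 4)) (Or.inl hp.ne')
  apply HasGradientAt.gradient
  rw [hasGradientAt_iff_hasFDerivAt]
  unfold EE
  refine h2.congr_fderiv ?_
  refine ContinuousLinearMap.ext fun v => ?_
  rw [Real.rpow_sub hp, Real.rpow_one]
  simp only [InnerProductSpace.toDual_apply_apply, real_inner_smul_left, ContinuousLinearMap.smul_apply,
    innerSL_apply_apply, smul_eq_mul, nsmul_eq_mul]
  push_cast
  field_simp
  ring

theorem JJ_EE {n : ℕ} (hn : 2 ≤ n) (u : Euc n → ℝ) (a : ℝ) (ha : 0 ≤ a) (haN : a ≤ n - 2)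
    (ha2 : (a / 2 - 1) ^ 2 ≤ (n : ℝ) - 1) (x₀ x : Euc n) :
    JJ u x₀ x (EE a x₀ x) (gradient (EE a x₀) x) ≤ 0 ∧
    (x - x₀ = gradient u x → gradient u x ≠ 0 →
      JJ u x₀ x (EE a x₀ x) (gradient (EE a x₀) x) < 0) := by
  have hp : 0 < 1 + ‖x - x₀‖ ^ 2 := by positivity
  have hW := WW_pos u x
  have hc : ⟪x - x₀, gradient u x⟫ ^ 2 ≤ ‖x - x₀‖ ^ 2 * ‖gradient u x‖ ^ 2 := by
    rw [← mul_pow]; exact sq_le_sq' (by linarith [abs_le.1 (abs_real_inner_le_norm (x - x₀) (gradient u x))])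
      (real_inner_le_norm _ _)
  have hw2 : ((WW u x)⁻¹) ^ 2 * (1 + ‖gradient u x‖ ^ 2) = 1 := by
    rw [← WW_sq]; field_simp
  have h := alg_JJ n a (EE a x₀ x) (1 + ‖x - x₀‖ ^ 2)⁻¹ (‖x - x₀‖ ^ 2) (‖gradient u x‖ ^ 2)
    ⟪x - x₀, gradient u x⟫ (WW u x)⁻¹ (by exact_mod_cast hn) ha haN ha2 (inv_mul_cancel₀ hp.ne')
    (by positivity) (by positivity) hc (by positivity) hw2
  have hn1 : ‖gradient (EE a x₀) x‖ ^ 2 = a ^ 2 / 4 * ((1 + ‖x - x₀‖ ^ 2)⁻¹) ^ 2 * EE a x₀ x ^ 2 *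
      ‖x - x₀‖ ^ 2 := by
    rw [grad_EE, norm_smul, mul_pow, Real.norm_eq_abs, sq_abs]; ring
  have hn2 : ⟪gradient u x, gradient (EE a x₀) x⟫ = -(a / 2) * (1 + ‖x - x₀‖ ^ 2)⁻¹ * EE a x₀ x *
      ⟪x - x₀, gradient u x⟫ := by
    rw [grad_EE, real_inner_smul_right, real_inner_comm]
  have hn3 : ⟪x - x₀, gradient (EE a x₀) x⟫ = -(a / 2) * (1 + ‖x - x₀‖ ^ 2)⁻¹ * EE a x₀ x *
      ‖x - x₀‖ ^ 2 := by
    rw [grad_EE, real_inner_smul_right, real_inner_self_eq_norm_sq]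
  unfold JJ
  rw [hn1, hn2, hn3]
  refine ⟨h.1, fun hx hg => h.2 (EE_pos a x₀ x).ne' (by positivity) ?_⟩
  rw [hx, real_inner_self_eq_norm_sq]; ring

/-- Pointwise bound for `JJ`. -/
theorem JJ_bound {n : ℕ} (hn : 2 ≤ n) (u : Euc n → ℝ) (x₀ x h : Euc n) (e M : ℝ)
    (he : |e| ≤ M) (hh : ‖x - x₀‖ * ‖h‖ ≤ M) :
    JJ u x₀ x e h ≤ 7 * M ^ 2 * ‖gradient u x‖ ^ 2 := by
  have hW := WW_pos u x
  have hW1 : (WW u x)⁻¹ ≤ 1 := by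
    apply inv_le_one_of_one_le₀
    nlinarith [WW_sq u x, sq_nonneg ‖gradient u x‖]
  have hW0 : 0 < (WW u x)⁻¹ := by positivity
  have hM : 0 ≤ M := (abs_nonneg e).trans he
  unfold JJ
  generalize (WW u x)⁻¹ = w at *
  have hs0 := norm_nonneg (gradient u x)
  have hr0 := norm_nonneg (x - x₀)
  have hh0 := norm_nonneg h
  have i1 := abs_real_inner_le_norm (x - x₀) (gradient u x)
  have i2 := abs_real_inner_le_norm (gradient u x) h
  have i3 := abs_real_inner_le_norm (x - x₀) h
  generalize ⟪x - x₀, gradient u x⟫ = c at *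
  generalize ⟪gradient u x, h⟫ = d at *
  generalize ⟪x - x₀, h⟫ = g at *
  generalize ‖gradient u x‖ = s at *
  generalize ‖x - x₀‖ = r at *
  generalize ‖h‖ = m at *
  have hw3 : w ^ 3 ≤ w := by
    have : w ^ 2 ≤ 1 := pow_le_one₀ hW0.le hW1
    nlinarith
  have hw30 : 0 < w ^ 3 := by positivity
  have t1 : c ^ 2 * (m ^ 2 * w - d ^ 2 * w ^ 3) ≤ M ^ 2 * s ^ 2 := by
    calc c ^ 2 * (m ^ 2 * w - d ^ 2 * w ^ 3) ≤ c ^ 2 * (m ^ 2 * 1) := by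
          have : 0 ≤ d ^ 2 * w ^ 3 := by positivity
          gcongr; nlinarith [sq_nonneg m]
      _ = |c| ^ 2 * m ^ 2 := by rw [sq_abs]; ring
      _ ≤ (r * s) ^ 2 * m ^ 2 := by gcongr
      _ = (r * m) ^ 2 * s ^ 2 := by ring
      _ ≤ _ := by gcongr
  have t2 : 2 * c * (w + w ^ 3) * e * d ≤ 4 * M ^ 2 * s ^ 2 := by
    calc 2 * c * (w + w ^ 3) * e * d ≤ |2 * c * (w + w ^ 3) * e * d| := le_abs_self _
      _ = 2 * |c| * (w + w ^ 3) * |e| * |d| := by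
          simp only [abs_mul, abs_two]; rw [abs_of_pos (by positivity : 0 < w + w ^ 3)]
      _ ≤ 2 * (r * s) * (1 + 1) * M * (s * m) := by gcongr; linarith
      _ = 4 * M * (r * m) * s ^ 2 := by ring
      _ ≤ 4 * M * M * s ^ 2 := by gcongr
      _ = _ := by ring
  have t3 : e ^ 2 * ((w + w ^ 3) * s ^ 2 - n * (s ^ 2 * w)) ≤ 0 := by
    apply mul_nonpos_of_nonneg_of_nonpos (sq_nonneg _)
    have : (2 : ℝ) ≤ n := by exact_mod_cast hn
    have h2 : 0 ≤ s ^ 2 * w := by positivity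
    nlinarith [sq_nonneg s]
  have t4 : -(2 * (s ^ 2 * w) * e * g) ≤ 2 * M ^ 2 * s ^ 2 := by
    calc -(2 * (s ^ 2 * w) * e * g) ≤ |2 * (s ^ 2 * w) * e * g| := neg_le_abs _
      _ = 2 * (s ^ 2 * w) * |e| * |g| := by
          simp only [abs_mul, abs_two]; rw [abs_of_nonneg (by positivity : 0 ≤ s ^ 2), abs_of_pos hW0]
      _ ≤ 2 * (s ^ 2 * 1) * M * M := by gcongr; linarith
      _ = _ := by ring
  linarith
theorem grad_mul {n : ℕ} {p q : Euc n → ℝ} {x : Euc n} (hp : DifferentiableAt ℝ p x)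
    (hq : DifferentiableAt ℝ q x) :
    gradient (fun y => p y * q y) x = p x • gradient q x + q x • gradient p x := by
  apply HasGradientAt.gradient
  rw [hasGradientAt_iff_hasFDerivAt]
  refine (hp.hasFDerivAt.mul hq.hasFDerivAt).congr_fderiv ?_
  simp [gradient]

theorem exists_cutoff (n : ℕ) : ∃ G : ℝ, 0 ≤ G ∧ ∀ R : ℝ, 0 < R → ∃ ζ : Euc n → ℝ,
    ContDiff ℝ 2 ζ ∧ HasCompactSupport ζ ∧ (∀ x, 0 ≤ ζ x) ∧ (∀ x, ζ x ≤ 1) ∧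
    (∀ x, ‖x‖ < R → ζ x = 1) ∧ (∀ x, 2 * R ≤ ‖x‖ → ζ x = 0) ∧
    (∀ x, ‖gradient ζ x‖ ≤ G / R) := by
  let b : ContDiffBump (0 : Euc n) := ⟨1, 2, by norm_num, by norm_num⟩
  have hb : ContDiff ℝ 2 b := b.contDiff
  have hbg : Continuous (fderiv ℝ b) := hb.continuous_fderiv (by norm_num)
  obtain ⟨G, hG⟩ := hbg.bounded_above_of_compact_support (b.hasCompactSupport.fderiv ℝ)
  have hG0 : 0 ≤ G := (norm_nonneg _).trans (hG 0)
  refine ⟨G, hG0, fun R hR => ⟨fun x => b (R⁻¹ • x), ?_, ?_, fun x => b.nonneg, fun x => b.le_one, ?_, ?_, ?_⟩⟩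
  · exact hb.comp (contDiff_const_smul _)
  · exact b.hasCompactSupport.comp_smul (inv_ne_zero hR.ne')
  · intro x hx
    apply b.one_of_mem_closedBall
    rw [mem_closedBall_zero_iff, norm_smul, norm_inv, Real.norm_of_nonneg hR.le]
    show _ ≤ (1 : ℝ)
    rw [inv_mul_le_iff₀ hR]; linarith
  · intro x hx
    apply b.zero_of_le_dist
    rw [dist_zero_right, norm_smul, norm_inv, Real.norm_of_nonneg hR.le]
    show (2 : ℝ) ≤ _
    rw [le_inv_mul_iff₀ hR]; linarith
  · intro x
    have h1 : HasFDerivAt (fun x : Euc n => b (R⁻¹ • x))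
        ((fderiv ℝ b (R⁻¹ • x)).comp (R⁻¹ • ContinuousLinearMap.id ℝ (Euc n))) x :=
      HasFDerivAt.comp (g := (b : Euc n → ℝ)) x
        (hb.differentiable (by norm_num) (R⁻¹ • x)).hasFDerivAt
        ((hasFDerivAt_id x).const_smul R⁻¹)
    unfold gradient
    rw [h1.fderiv, LinearIsometryEquiv.norm_map, ContinuousLinearMap.comp_smul,
      ContinuousLinearMap.comp_id, norm_smul, norm_inv, Real.norm_of_nonneg hR.le, inv_mul_eq_div]
    gcongr
    exact hG _

theorem EE_bound {n : ℕ} (a : ℝ) (ha : 0 ≤ a) (x₀ x : Euc n) (R : ℝ) (hR : 0 < R)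
    (h : R / 2 ≤ ‖x - x₀‖) : EE a x₀ x ≤ 2 ^ (a / 2) * R ^ (-(a / 2)) := by
  have h1 : EE a x₀ x ≤ (R / 2) ^ (-(a / 2)) := by
    unfold EE
    have e : (R / 2) ^ (-(a / 2)) = ((R / 2) ^ 2) ^ (-(a / 4)) := by
      rw [← Real.rpow_natCast, ← Real.rpow_mul (by positivity)]; congr 1; push_cast; ring
    rw [e]
    apply Real.rpow_le_rpow_of_nonpos (by positivity) _ (by linarith)
    nlinarith [pow_le_pow_left₀ (by positivity) h 2]
  refine h1.trans (le_of_eq ?_)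
  rw [Real.div_rpow hR.le (by norm_num), Real.rpow_neg (by norm_num : (0 : ℝ) ≤ 2), div_inv_eq_mul, mul_comm]

theorem eta_bound {n : ℕ} (a : ℝ) (ha : 0 ≤ a) (x₀ x : Euc n) (R G : ℝ) (hR : 0 < R) (hG : 0 ≤ G)
    (hx₀ : 2 * ‖x₀‖ ≤ R) (hx1 : R ≤ ‖x‖) (hx2 : ‖x‖ ≤ 2 * R) (ζ : Euc n → ℝ) (hζ : ContDiff ℝ 2 ζ)
    (h0 : 0 ≤ ζ x) (h1 : ζ x ≤ 1) (hg : ‖gradient ζ x‖ ≤ G / R) :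
    |EE a x₀ x * ζ x| ≤ (1 + 3 * G + a / 2) * (2 ^ (a / 2) * R ^ (-(a / 2))) ∧
    ‖x - x₀‖ * ‖gradient (fun y => EE a x₀ y * ζ y) x‖ ≤
      (1 + 3 * G + a / 2) * (2 ^ (a / 2) * R ^ (-(a / 2))) := by
  have hr1 : R / 2 ≤ ‖x - x₀‖ := by linarith [norm_sub_norm_le x x₀]
  have hr2 : ‖x - x₀‖ ≤ 3 * R := by linarith [norm_sub_le x x₀]
  have hE := EE_bound a ha x₀ x R hR hr1
  have hE0 := EE_pos a x₀ x
  rw [grad_mul ((contDiff_EE a x₀).differentiable (by norm_num) x) (hζ.differentiable (by norm_num) x)]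
  generalize 2 ^ (a / 2) * R ^ (-(a / 2)) = T at *
  have hT : 0 < T := hE0.trans_le hE
  constructor
  · rw [abs_of_nonneg (by positivity)]
    calc EE a x₀ x * ζ x ≤ T * 1 := by gcongr
      _ ≤ _ := by nlinarith [mul_nonneg hG hT.le, mul_nonneg ha hT.le]
  · have hp : 0 < 1 + ‖x - x₀‖ ^ 2 := by positivity
    have n1 : ‖gradient (EE a x₀) x‖ = a / 2 * (1 + ‖x - x₀‖ ^ 2)⁻¹ * EE a x₀ x * ‖x - x₀‖ := by
      rw [grad_EE, norm_smul, norm_mul, norm_mul, norm_neg, Real.norm_of_nonneg (by positivity : 0 ≤ a / 2),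
        Real.norm_of_nonneg (by positivity : 0 ≤ (1 + ‖x - x₀‖ ^ 2)⁻¹), Real.norm_of_nonneg hE0.le]
    have n2 : ‖x - x₀‖ * ‖gradient (EE a x₀) x‖ ≤ a / 2 * T := by
      rw [n1]
      calc _ = a / 2 * ((1 + ‖x - x₀‖ ^ 2)⁻¹ * ‖x - x₀‖ ^ 2) * EE a x₀ x := by ring
        _ ≤ a / 2 * 1 * T := by
          gcongr
          rw [inv_mul_le_iff₀ hp]; linarith
        _ = _ := by ring
    calc _ ≤ ‖x - x₀‖ * (‖EE a x₀ x • gradient ζ x‖ + ‖ζ x • gradient (EE a x₀) x‖) := by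
          gcongr; exact norm_add_le _ _
      _ = EE a x₀ x * (‖x - x₀‖ * ‖gradient ζ x‖) + ζ x * (‖x - x₀‖ * ‖gradient (EE a x₀) x‖) := by
          rw [norm_smul, norm_smul, Real.norm_of_nonneg hE0.le, Real.norm_of_nonneg h0]; ring
      _ ≤ T * (3 * R * (G / R)) + 1 * (a / 2 * T) := by gcongr
      _ = T * (3 * G) + 1 * (a / 2 * T) := by field_simp
      _ ≤ _ := by linarith

theorem main_ineq {n : ℕ} (hn : 2 ≤ n) {f : ℝ → ℝ} {u : Euc n → ℝ} (hf : ContDiff ℝ 1 f)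
    (hu : ContDiff ℝ 3 u) (hs : IsStableSolution (Set.univ : Set (Euc n)) f u)
    (a : ℝ) (ha : 0 ≤ a) (haN : a ≤ n - 2)
    (ha2 : (a / 2 - 1) ^ 2 ≤ (n : ℝ) - 1) (x₀ : Euc n) (R₀ R G : ℝ) (hR0 : 0 < R₀) (hRR : R₀ ≤ R)
    (hG : 0 ≤ G) (hx₀ : 2 * ‖x₀‖ ≤ R)
    (ζ : Euc n → ℝ) (hζ : ContDiff ℝ 2 ζ) (hζc : HasCompactSupport ζ) (h0 : ∀ x, 0 ≤ ζ x)
    (h1 : ∀ x, ζ x ≤ 1) (hz1 : ∀ x, ‖x‖ < R → ζ x = 1) (hz0 : ∀ x, 2 * R ≤ ‖x‖ → ζ x = 0)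
    (hzg : ∀ x, ‖gradient ζ x‖ ≤ G / R) :
    ∫ x in ball (0 : Euc n) R₀, -JJ u x₀ x (EE a x₀ x) (gradient (EE a x₀) x) ≤
      7 * ((1 + 3 * G + a / 2) * (2 ^ (a / 2) * R ^ (-(a / 2)))) ^ 2 *
      ∫ x in ball (0 : Euc n) (2*R) \ ball (0 : Euc n) R, ‖gradient u x‖ ^ 2 := by
  have hR : 0 < R := hR0.trans_le hRR
  have hη : ContDiff ℝ 2 (fun y => EE a x₀ y * ζ y) := (contDiff_EE a x₀).mul hζ
  have hηc : HasCompactSupport (fun y => EE a x₀ y * ζ y) := hζc.mul_left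
  have key := key_ineq_s4 hf hu hs x₀ _ hη hηc
  have hb := fun x hx1 hx2 => eta_bound a ha x₀ x R G hR hG hx₀ hx1 hx2 ζ hζ (h0 x) (h1 x) (hzg x)
  generalize (1 + 3 * G + a / 2) * (2 ^ (a / 2) * R ^ (-(a / 2))) = M at *
  set K : Euc n → ℝ := fun x => -JJ u x₀ x (EE a x₀ x) (gradient (EE a x₀) x) with hK
  have hE1 : ContDiff ℝ 1 (EE a x₀) := (contDiff_EE a x₀).of_le (by norm_num)
  have hη1 : ContDiff ℝ 1 (fun y => EE a x₀ y * ζ y) := hη.of_le (by norm_num)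
  have hKc : Continuous K := (cont_JJ hu x₀ hE1.continuous (cont_gradient hE1)).neg
  have hJc : Continuous (fun x => JJ u x₀ x (EE a x₀ x * ζ x) (gradient (fun y => EE a x₀ y * ζ y) x)) :=
    cont_JJ hu x₀ hη1.continuous (cont_gradient hη1)
  have hJi : Integrable (fun x => JJ u x₀ x (EE a x₀ x * ζ x) (gradient (fun y => EE a x₀ y * ζ y) x)) := by
    apply integ_of hηc hJc
    intro x hx
    obtain ⟨e1, e2⟩ := zero_out hx
    have hgr : gradient (fun y => EE a x₀ y * ζ y) x = 0 := by
      unfold gradient; rw [e2]; simp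
    rw [hgr, show EE a x₀ x * ζ x = 0 from e1]
    simp [JJ]
  have hsc : Continuous (fun x => ‖gradient u x‖ ^ 2) :=
    ((cont_gradient (hu.of_le (by norm_num))).norm).pow 2
  set A := ball (0 : Euc n) (2*R) \ ball (0 : Euc n) R with hA
  have hAm : MeasurableSet A := measurableSet_ball.diff measurableSet_ball
  have hBm : MeasurableSet (ball (0 : Euc n) R₀) := measurableSet_ball
  have iK : IntegrableOn K (ball (0 : Euc n) R₀) :=
    (hKc.continuousOn.integrableOn_compact (isCompact_closedBall 0 R₀)).mono_set ball_subset_closedBall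
  have is : IntegrableOn (fun x => ‖gradient u x‖ ^ 2) A :=
    (hsc.continuousOn.integrableOn_compact (isCompact_closedBall 0 (2*R))).mono_set
      (Set.sdiff_subset.trans ball_subset_closedBall)
  have iK' := iK.integrable_indicator hBm
  have is2 : IntegrableOn (fun x => 7 * M ^ 2 * ‖gradient u x‖ ^ 2) A := is.const_mul (7 * M ^ 2)
  have is' := is2.integrable_indicator hAm
  have hle : ∀ x, JJ u x₀ x (EE a x₀ x * ζ x) (gradient (fun y => EE a x₀ y * ζ y) x) ≤
      A.indicator (fun x => 7 * M ^ 2 * ‖gradient u x‖ ^ 2) x - (ball (0 : Euc n) R₀).indicator K x := by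
    intro x
    rcases lt_or_ge ‖x‖ R with hx | hx
    · have hxA : x ∉ A := by simp [hA, hx]
      rw [Set.indicator_of_notMem hxA]
      have hev : (fun y => EE a x₀ y * ζ y) =ᶠ[𝓝 x] EE a x₀ := by
        filter_upwards [(isOpen_lt continuous_norm continuous_const).mem_nhds (show ‖x‖ < R from hx)] with y hy
        rw [hz1 y hy, mul_one]
      have hgr : gradient (fun y => EE a x₀ y * ζ y) x = gradient (EE a x₀) x := by
        unfold gradient; rw [hev.fderiv_eq]
      rw [hgr, hz1 x hx, mul_one]
      have hK0 := (JJ_EE hn u a ha haN ha2 x₀ x).1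
      by_cases hxB : x ∈ ball (0 : Euc n) R₀
      · rw [Set.indicator_of_mem hxB]; simp [hK]
      · rw [Set.indicator_of_notMem hxB]; simpa using hK0
    · have hxB : x ∉ ball (0 : Euc n) R₀ := by simp; linarith
      rw [Set.indicator_of_notMem hxB]
      rcases lt_or_ge ‖x‖ (2 * R) with hx2 | hx2
      · have hxA : x ∈ A := by simp [hA, hx, hx2]
        rw [Set.indicator_of_mem hxA, sub_zero]
        exact JJ_bound hn u x₀ x _ _ M (hb x hx hx2.le).1 (hb x hx hx2.le).2
      · have hxA : x ∉ A := by simp [hA, hx2]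
        rw [Set.indicator_of_notMem hxA]
        have hmin : IsLocalMin (fun y => EE a x₀ y * ζ y) x := by
          refine Filter.Eventually.of_forall fun y => ?_
          simp only [hz0 x hx2, mul_zero]
          exact mul_nonneg (EE_pos a x₀ y).le (h0 y)
        have hgr : gradient (fun y => EE a x₀ y * ζ y) x = 0 := by
          unfold gradient; rw [hmin.fderiv_eq_zero]; simp
        rw [hgr, hz0 x hx2]
        simp [JJ]
  have h2 := integral_mono hJi (is'.sub iK') hle
  have h3 := key.trans h2
  simp only [Pi.sub_apply] at h3
  rw [integral_sub is' iK', integral_indicator hAm, integral_indicator hBm, integral_const_mul] at h3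
  linarith

theorem stmt_aux (n : ℕ) (hn : 2 ≤ n) (f : ℝ → ℝ) (u : Euc n → ℝ)
    (hf : ContDiff ℝ 1 f)
    (hreg : ContDiff ℝ 3 u)
    (hstable : IsStableSolution (Set.univ : Set (Euc n)) f u)
    (hnc : ¬ ∃ c₀ : ℝ, ∀ x : Euc n, u x = c₀) (a : ℝ) (ha : 0 ≤ a) (haN : a ≤ n - 2)
    (ha2 : (a / 2 - 1) ^ 2 ≤ (n : ℝ) - 1) :
    ∃ c > (0:ℝ), ∃ R₀ > (2:ℝ), ∀ R : ℝ, R₀ ≤ R →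
      c * R ^ (a - n) ≤
        ⨍ x in ball (0 : Euc n) (2*R) \ ball (0 : Euc n) R, ‖gradient u x‖ ^ 2 := by
  obtain ⟨p, hp⟩ : ∃ p, gradient u p ≠ 0 := by
    by_contra h
    push Not at h
    apply hnc
    refine ⟨u 0, fun x => is_const_of_fderiv_eq_zero (hreg.differentiable (by norm_num)) (fun y => ?_) x 0⟩
    have := h y
    unfold gradient at this
    simpa using this
  obtain ⟨G, hG, hcut⟩ := exists_cutoff n
  set x₀ := p - gradient u p with hx₀
  set R₀ : ℝ := 3 + 2 * ‖x₀‖ + ‖p‖ with hR₀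
  have hR₀3 : 3 ≤ R₀ := by rw [hR₀]; linarith [norm_nonneg x₀, norm_nonneg p]
  set K : Euc n → ℝ := fun x => -JJ u x₀ x (EE a x₀ x) (gradient (EE a x₀) x) with hK
  have hE1 : ContDiff ℝ 1 (EE a x₀) := (contDiff_EE a x₀).of_le (by norm_num)
  have hKc : Continuous K := (cont_JJ hreg x₀ hE1.continuous (cont_gradient hE1)).neg
  have hK0 : ∀ x, 0 ≤ K x := fun x => by
    have := (JJ_EE hn u a ha haN ha2 x₀ x).1
    simp only [hK]; linarith
  have hKp : 0 < K p := by
    have := (JJ_EE hn u a ha haN ha2 x₀ p).2 (by rw [hx₀]; abel) hp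
    simp only [hK]; linarith
  have hc1 : 0 < ∫ x in ball (0 : Euc n) R₀, K x := by
    rw [setIntegral_pos_iff_support_of_nonneg_ae (Filter.Eventually.of_forall hK0)
      ((hKc.continuousOn.integrableOn_compact (isCompact_closedBall 0 R₀)).mono_set ball_subset_closedBall)]
    refine IsOpen.measure_pos _ (hKc.isOpen_support.inter isOpen_ball) ⟨p, hKp.ne', ?_⟩
    simp only [mem_ball_zero_iff, hR₀]; linarith [norm_nonneg x₀, norm_nonneg p]
  set c1 := ∫ x in ball (0 : Euc n) R₀, K x with hc1d
  set V := volume.real (ball (0 : Euc n) 1) with hV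
  have hVpos : 0 < V := by
    rw [hV, measureReal_def]
    exact ENNReal.toReal_pos (measure_ball_pos _ _ one_pos).ne' measure_ball_lt_top.ne
  set D : ℝ := 7 * ((1 + 3 * G + a / 2) * 2 ^ (a / 2)) ^ 2 with hD
  have hDpos : 0 < D := by positivity
  clear_value c1 V D
  refine ⟨c1 / (D * (2 ^ n * V)), by positivity, R₀, by linarith, fun R hR => ?_⟩
  have hRpos : 0 < R := by linarith
  obtain ⟨ζ, z1, z2, z3, z4, z5, z6, z7⟩ := hcut R hRpos
  have hm := main_ineq hn hf hreg hstable a ha haN ha2 x₀ R₀ R G (by linarith) hR hG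
    (by rw [hR₀] at hR; linarith [norm_nonneg x₀, norm_nonneg p]) ζ z1 z2 z3 z4 z5 z6 z7
  rw [← hc1d] at hm
  rw [setAverage_eq]
  set A := ball (0 : Euc n) (2*R) \ ball (0 : Euc n) R with hA
  set I := ∫ x in A, ‖gradient u x‖ ^ 2 with hI
  have hRa : (R ^ (-(a / 2))) ^ 2 = (R ^ a)⁻¹ := by
    rw [← Real.rpow_natCast, ← Real.rpow_mul hRpos.le, ← Real.rpow_neg hRpos.le]; congr 1; push_cast; ring
  clear_value I
  have hm2 : c1 ≤ D * (R ^ a)⁻¹ * I := by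
    refine hm.trans (le_of_eq ?_)
    rw [hD, ← hRa]; ring
  have hRap : 0 < R ^ a := by positivity
  have hIpos : 0 < I := by
    by_contra h; push Not at h
    have : D * (R ^ a)⁻¹ * I ≤ 0 := mul_nonpos_of_nonneg_of_nonpos (by positivity) h
    linarith
  have hvA : volume.real A ≠ 0 := by
    intro h0
    rw [measureReal_eq_zero_iff (measure_ne_top_of_subset Set.sdiff_subset measure_ball_lt_top.ne)] at h0
    rw [hI, Measure.restrict_eq_zero.2 h0] at hIpos
    simp at hIpos
  have hvA0 : 0 < volume.real A := lt_of_le_of_ne measureReal_nonneg (Ne.symm hvA)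
  have hvle : volume.real A ≤ (2 * R) ^ n * V := by
    calc volume.real A ≤ volume.real (ball (0 : Euc n) (2 * R)) :=
          measureReal_mono Set.sdiff_subset measure_ball_lt_top.ne
      _ = _ := by
          rw [measureReal_def, Measure.addHaar_ball_of_pos volume (0 : Euc n) (by positivity), ENNReal.toReal_mul,
            ENNReal.toReal_ofReal (by positivity), hV, measureReal_def]
          simp
  rw [smul_eq_mul]
  calc c1 / (D * (2 ^ n * V)) * R ^ (a - n) = (c1 * R ^ a / D) / ((2 * R) ^ n * V) := by
        rw [Real.rpow_sub hRpos, Real.rpow_natCast, mul_pow]; field_simp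
    _ ≤ I / ((2 * R) ^ n * V) := by
        gcongr
        rw [div_le_iff₀ hDpos]
        calc c1 * R ^ a ≤ D * (R ^ a)⁻¹ * I * R ^ a := by gcongr
          _ = I * D := by field_simp
    _ ≤ I / volume.real A := by gcongr
    _ = _ := by rw [inv_mul_eq_div]
/-- **Theorem (Liouville-type lower bound for nonconstant stable solutions).**
Let `n ≥ 2`, `f ∈ C¹(ℝ)` and let `u` be a `W^{3,1}_loc(ℝⁿ)` stable solution of
`div(∇u/√(1+|∇u|²)) = -f(u)` in `ℝⁿ`.  Put `q_n = -1` if `2 ≤ n ≤ 10` and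
`q_n = -n/2 + √(n-1) + 1` if `n ≥ 11`.  If `u` is nonconstant, then there are `c > 0`
and `R₀ > 2` with `⨍_{B_{2R}∖B_R} |∇u|² ≥ c R^{2 q_n}` for all `R ≥ R₀`. -/
theorem stmt_4 (n : ℕ) (hn : 2 ≤ n) (f : ℝ → ℝ) (u : Euc n → ℝ)
    (hf : ContDiff ℝ 1 f)
    (hreg : ContDiff ℝ 3 u)
    (hstable : IsStableSolution (Set.univ : Set (Euc n)) f u)
    (hnc : ¬ ∃ c₀ : ℝ, ∀ x : Euc n, u x = c₀) :
    ∃ c > (0:ℝ), ∃ R₀ > (2:ℝ), ∀ R : ℝ, R₀ ≤ R →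
      c * R ^ (2 * (if n ≤ 10 then (-1 : ℝ)
          else -(n:ℝ)/2 + Real.sqrt ((n:ℝ) - 1) + 1)) ≤
        ⨍ x in ball (0 : Euc n) (2*R) \ ball (0 : Euc n) R, ‖gradient u x‖ ^ 2 := by
  have hn2 : (2 : ℝ) ≤ n := by exact_mod_cast hn
  split_ifs with h
  · have h10 : (n : ℝ) ≤ 10 := by exact_mod_cast h
    obtain ⟨c, hc, R₀, hR, H⟩ := stmt_aux n hn f u hf hreg hstable hnc ((n : ℝ) - 2) (by linarith) le_rfl
      (by nlinarith)
    refine ⟨c, hc, R₀, hR, fun R hRR => ?_⟩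
    have := H R hRR
    rwa [show (n : ℝ) - 2 - n = 2 * (-1) by ring] at this
  · have h11 : (11 : ℝ) ≤ n := by exact_mod_cast (not_le.1 h)
    have hsq : Real.sqrt ((n : ℝ) - 1) ^ 2 = (n : ℝ) - 1 := Real.sq_sqrt (by linarith)
    have h3 : 3 ≤ Real.sqrt ((n : ℝ) - 1) := Real.le_sqrt_of_sq_le (by linarith)
    obtain ⟨c, hc, R₀, hR, H⟩ := stmt_aux n hn f u hf hreg hstable hnc
      (2 * Real.sqrt ((n : ℝ) - 1) + 2) (by linarith) (by nlinarith)
      (by nlinarith)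
    refine ⟨c, hc, R₀, hR, fun R hRR => ?_⟩
    have := H R hRR
    rwa [show 2 * Real.sqrt ((n : ℝ) - 1) + 2 - n = 2 * (-(n : ℝ) / 2 + Real.sqrt ((n : ℝ) - 1) + 1) by ring]
      at this
end
end
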